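/- arXiv:0909.0244 — 3 statements merged into one kernel-verified Lean document; each statement's English description precedes it below -/
import Mathlib

section
/- Let l ∈ R_1 and y ∈ R_1 be strong Lefschetz elements for the finite length graded R-modules M and N respectively. If the Hilbert function of M is symmetric (h_d(M) = h_{p−d}(M) for all d, where p is the socle degree of M) and the decomposition of N as a graded k[y]-module is almost centered, then M ⊗_k N has the strong Lefschetz property and the decomposition of M ⊗_k N as a graded k[l+y]-module is almost centered. -/
open MvPolynomial TensorProduct

/-- `gr` is a grading making `M` a graded module over the standard graded polynomial ring
`k[x_1, …, x_n]`: `M` is the internal direct sum of the subspaces `gr i`, and homogeneous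
polynomials of degree `i` map `gr j` into `gr (i + j)`. -/
def IsGrading (k : Type*) [Field k] (n : ℕ) {M : Type*} [AddCommGroup M] [Module k M]
    [Module (MvPolynomial (Fin n) k) M] (gr : ℕ → Submodule k M) : Prop :=
  DirectSum.IsInternal gr ∧
    ∀ (i j : ℕ) (r : MvPolynomial (Fin n) k), r ∈ homogeneousSubmodule (Fin n) k i →
      ∀ x ∈ gr j, r • x ∈ gr (i + j)

/-- The scalar `z` satisfies the strong Lefschetz condition for the grading `gr`:
for all nonnegative `a` and `d`, multiplication by `z ^ a` maps `gr d` to `gr (d + a)`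
injectively or surjectively. -/
def IsSLAction {k A T : Type*} [Field k] [CommRing A] [AddCommGroup T] [Module k T]
    [Module A T] (gr : ℕ → Submodule k T) (z : A) : Prop :=
  ∀ a d : ℕ, (∀ x ∈ gr d, z ^ a • x = 0 → x = 0) ∨
    (∀ w ∈ gr (d + a), ∃ x ∈ gr d, z ^ a • x = w)

/-- The data `(iv α, dv α, e α)` exhibits a degree-zero decomposition
`T ≅ ⊕_α k[z](-(iv α))/(z^(dv α))` of the graded module `T` as a graded `k[z]`-module:
each `e α` is homogeneous of degree `iv α`, is killed by `z ^ dv α`, the elements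
`z ^ j • e α` (`j < dv α`) are homogeneous of degree `iv α + j` and form a `k`-basis of `T`. -/
def IsDecomp {k A T : Type*} [Field k] [CommRing A] [AddCommGroup T] [Module k T]
    [Module A T] (gr : ℕ → Submodule k T) (z : A) {Λ : Type*} (iv dv : Λ → ℕ)
    (e : Λ → T) : Prop :=
  (∀ α, 1 ≤ dv α) ∧ (∀ (α : Λ) (j : ℕ), j < dv α → z ^ j • e α ∈ gr (iv α + j)) ∧
    (∀ α, z ^ dv α • e α = 0) ∧
    LinearIndependent k (fun q : Σ α : Λ, Fin (dv α) => z ^ (q.2 : ℕ) • e q.1) ∧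
    Submodule.span k (Set.range (fun q : Σ α : Λ, Fin (dv α) => z ^ (q.2 : ℕ) • e q.1)) = ⊤

/-- `p` is the socle degree of the graded module with grading `gr`:
the largest degree in which the module is nonzero. -/
def IsSocleDegree {k T : Type*} [Field k] [AddCommGroup T] [Module k T]
    (gr : ℕ → Submodule k T) (p : ℕ) : Prop :=
  gr p ≠ ⊥ ∧ ∀ e : ℕ, p < e → gr e = ⊥

/-- The partial order on the cyclic summands of a decomposition:
`S_β ⪯ S_α` iff `iv α ≤ iv β` and `dv β + iv β ≤ dv α + iv α`. -/
def Prec {Λ : Type*} (iv dv : Λ → ℕ) (β α : Λ) : Prop :=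
  iv α ≤ iv β ∧ dv β + iv β ≤ dv α + iv α

/-- A decomposition with data `(iv, dv)` is almost centered if whenever `S_β ⪯ S_α` one has
`|L_{αβ} - R_{αβ}| ≤ 1`, where `L_{αβ} = iv β - iv α` and
`R_{αβ} = (dv α + iv α) - (dv β + iv β)`. -/
def AlmostCentered {Λ : Type*} (iv dv : Λ → ℕ) : Prop :=
  ∀ α β : Λ, Prec iv dv β α →
    |((iv β : ℤ) - (iv α : ℤ)) - (((dv α : ℤ) + (iv α : ℤ)) - ((dv β : ℤ) + (iv β : ℤ)))| ≤ 1

/-- The strong Lefschetz condition for an endomorphism `f` (the action of a scalar on a module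
realized as an endomorphism): for all nonnegative `a` and `d`, the map `f ^ a` sends `gr d`
to `gr (d + a)` injectively or surjectively. -/
def IsSLEnd {k T : Type*} [Field k] [AddCommGroup T] [Module k T]
    (gr : ℕ → Submodule k T) (f : Module.End k T) : Prop :=
  ∀ a d : ℕ, (∀ x ∈ gr d, (f ^ a) x = 0 → x = 0) ∨
    (∀ w ∈ gr (d + a), ∃ x ∈ gr d, (f ^ a) x = w)

/-- A degree-zero decomposition `T ≅ ⊕_α k[z](-(iv α))/(z^(dv α))` of `T` as a graded
`k[z]`-module, where `z` acts via the endomorphism `f`. -/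
def IsDecompEnd {k T : Type*} [Field k] [AddCommGroup T] [Module k T]
    (gr : ℕ → Submodule k T) (f : Module.End k T) {Λ : Type*} (iv dv : Λ → ℕ)
    (e : Λ → T) : Prop :=
  (∀ α, 1 ≤ dv α) ∧ (∀ (α : Λ) (j : ℕ), j < dv α → (f ^ j) (e α) ∈ gr (iv α + j)) ∧
    (∀ α, (f ^ dv α) (e α) = 0) ∧
    LinearIndependent k (fun q : Σ α : Λ, Fin (dv α) => (f ^ (q.2 : ℕ)) (e q.1)) ∧
    Submodule.span k (Set.range (fun q : Σ α : Λ, Fin (dv α) => (f ^ (q.2 : ℕ)) (e q.1))) = ⊤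

/-- The total-degree grading on `M ⊗_k N`: the degree `e` piece is spanned by the tensors
`x ⊗ y` with `x, y` homogeneous of degrees summing to `e`. -/
def tensorGr {k : Type*} [Field k] {M N : Type*} [AddCommGroup M] [Module k M]
    [AddCommGroup N] [Module k N] (grM : ℕ → Submodule k M) (grN : ℕ → Submodule k N)
    (e : ℕ) : Submodule k (M ⊗[k] N) :=
  Submodule.span k {t | ∃ (d₁ d₂ : ℕ) (x : M) (y : N), d₁ + d₂ = e ∧ x ∈ grM d₁ ∧
    y ∈ grN d₂ ∧ t = x ⊗ₜ[k] y}

/-- The action of the ring `R ⊗_k R` on `M ⊗_k N`, where the first factor acts on `M` and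
the second on `N`, realized as a `k`-algebra homomorphism into the endomorphisms. -/
noncomputable def tensorAct (k : Type*) [Field k] {n : ℕ} (M N : Type*) [AddCommGroup M]
    [Module k M] [Module (MvPolynomial (Fin n) k) M]
    [IsScalarTower k (MvPolynomial (Fin n) k) M]
    [AddCommGroup N] [Module k N] [Module (MvPolynomial (Fin n) k) N]
    [IsScalarTower k (MvPolynomial (Fin n) k) N] :
    (MvPolynomial (Fin n) k) ⊗[k] (MvPolynomial (Fin n) k) →ₐ[k]
      Module.End k (M ⊗[k] N) :=
  (Module.endTensorEndAlgHom (R := k) (S := k) (A := k)).comp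
    (Algebra.TensorProduct.map (Algebra.lsmul k k M (A := MvPolynomial (Fin n) k))
      (Algebra.lsmul k k N (A := MvPolynomial (Fin n) k)))

/-- Linear forms of `R ⊗_k R`: elements `r ⊗ 1 + 1 ⊗ s` with `r, s` linear forms of `R`. -/
def IsLinearForm2 {k : Type*} [Field k] {n : ℕ}
    (w : (MvPolynomial (Fin n) k) ⊗[k] (MvPolynomial (Fin n) k)) : Prop :=
  ∃ r s : MvPolynomial (Fin n) k, r ∈ homogeneousSubmodule (Fin n) k 1 ∧
    s ∈ homogeneousSubmodule (Fin n) k 1 ∧ w = r ⊗ₜ[k] (1 : MvPolynomial (Fin n) k) +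
      (1 : MvPolynomial (Fin n) k) ⊗ₜ[k] s

/-!
Each string `z^j e` of a decomposition is an irreducible representation of `sl₂`: together with a
suitable lowering operator, `z` acts as the raising operator, and the weight in degree `d` is
`2 d - c`, where `c` is the sum of the two end degrees of the string. By the strong Lefschetz
property, the symmetry of the Hilbert function of `M` forces `c = p` for every string of `M`, and
almost centeredness forces `c ∈ {C, C + 1}` for every string of `N`, with a constant `C`. In the
tensor product the sums `c` add up, so `M ⊗ N` is a representation of `sl₂` with
`c ∈ {p + C, p + C + 1}` throughout. For such a representation the commutation relation between
`E^a` and `F` shows that `E^a` is injective in degree `d` when `2 d + a` is at most all of the `c`,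
and surjective when it is at least all of them. As there are only two consecutive values of `c`, one
of the two cases always occurs; conversely, these ranges confine every string of every decomposition
to the same two values.
-/

/-! ### Graded representations of `sl₂` -/

section Ring

variable {A : Type*} [Ring A] {E F H : A}

theorem mul_pow_of_lie_eq_two_nsmul (h : ⁅H, E⁆ = 2 • E) (a : ℕ) :
    H * E ^ a = E ^ a * H + (2 * a) • E ^ a := by
  have hHE : H * E = E * H + 2 • E := by rw [← h, Ring.lie_def]; abel
  induction a with
  | zero => simp
  | succ a ih =>
    calc H * E ^ (a + 1) = (H * E ^ a) * E := by rw [pow_succ, mul_assoc]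
      _ = E ^ a * (H * E) + (2 * a) • E ^ (a + 1) := by
        rw [ih, add_mul, smul_mul_assoc, mul_assoc, ← pow_succ]
      _ = E ^ (a + 1) * H + (2 * (a + 1)) • E ^ (a + 1) := by
        rw [hHE, mul_add, mul_smul_comm, ← mul_assoc, ← pow_succ]
        module

theorem pow_succ_mul_of_lie_lie_eq_two_nsmul (h : ⁅⁅E, F⁆, E⁆ = 2 • E) (a : ℕ) :
    E ^ (a + 1) * F = F * E ^ (a + 1) + (a + 1) • (E ^ a * ⁅E, F⁆ + a • E ^ a) := by
  have hEF : E * F = F * E + ⁅E, F⁆ := by rw [Ring.lie_def]; abel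
  induction a with
  | zero => simp [hEF]
  | succ a ih =>
    calc E ^ (a + 1 + 1) * F = E * (E ^ (a + 1) * F) := by rw [pow_succ', mul_assoc]
      _ = (E * F) * E ^ (a + 1) + (a + 1) • (E ^ (a + 1) * ⁅E, F⁆ + a • E ^ (a + 1)) := by
        rw [ih, mul_add, mul_smul_comm, mul_add, mul_smul_comm, ← mul_assoc, ← mul_assoc,
          ← pow_succ']
      _ = F * E ^ (a + 1 + 1) + ⁅E, F⁆ * E ^ (a + 1) +
          (a + 1) • (E ^ (a + 1) * ⁅E, F⁆ + a • E ^ (a + 1)) := by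
        rw [hEF, add_mul, mul_assoc, ← pow_succ']
      _ = F * E ^ (a + 1 + 1) +
          (a + 1 + 1) • (E ^ (a + 1) * ⁅E, F⁆ + (a + 1) • E ^ (a + 1)) := by
        rw [mul_pow_of_lie_eq_two_nsmul h]
        module

end Ring

/-- The strong Lefschetz condition with its centre of symmetry located: for the map
`f ^ a : gr d → gr (d + a)`, the sum `2 * d + a` of the two degrees decides between injectivity
(up to `m`) and surjectivity (from `n` on). The field `eq_bot` is surjectivity from negative
source degrees. -/
structure HasLefschetzRange {k V : Type*} [Field k] [AddCommGroup V] [Module k V]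
    (gr : ℕ → Submodule k V) (f : Module.End k V) (m n : ℕ) : Prop where
  injective : ∀ a d, 2 * d + a ≤ m → ∀ x ∈ gr d, (f ^ a) x = 0 → x = 0
  surjective : ∀ a d, n ≤ 2 * d + a → ∀ w ∈ gr (d + a), ∃ x ∈ gr d, (f ^ a) x = w
  eq_bot : ∀ d, n < d → gr d = ⊥

/-- The operators `E` and `F` generate an action of `sl₂`, with `⁅E, F⁆` as weight operator, under
which `gr d` is a sum of weight spaces of weights `2 * d - c` with `m ≤ c ≤ n`. -/
structure IsSl2Graded {k V : Type*} [Field k] [AddCommGroup V] [Module k V]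
    (gr : ℕ → Submodule k V) (E F : Module.End k V) (m n : ℕ) : Prop where
  raise : ∀ d, gr d ≤ (gr (d + 1)).comap E
  lower : ∀ d, gr (d + 1) ≤ (gr d).comap F
  lower_zero : gr 0 ≤ LinearMap.ker F
  lie_lie : ⁅⁅E, F⁆, E⁆ = 2 • E
  le_weights : ∀ d, gr d ≤
    ⨆ c ∈ Set.Icc m n, gr d ⊓ Module.End.eigenspace ⁅E, F⁆ (2 * (d : k) - (c : k))
  eq_bot : ∀ d, n < d → gr d = ⊥

theorem pow_mem_of_le_comap {k V : Type*} [Semiring k] [AddCommMonoid V] [Module k V]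
    {gr : ℕ → Submodule k V} {f : Module.End k V} (hf : ∀ d, gr d ≤ (gr (d + 1)).comap f)
    (a : ℕ) {d : ℕ} {x : V} (hx : x ∈ gr d) : (f ^ a) x ∈ gr (d + a) := by
  induction a with
  | zero => exact hx
  | succ a ih =>
    rw [pow_succ', Module.End.mul_apply]
    exact hf _ ih

namespace IsSl2Graded

variable {k V : Type*} [Field k] [AddCommGroup V] [Module k V]
  {gr : ℕ → Submodule k V} {E F : Module.End k V} {m n : ℕ}

theorem raise_lower_mem (h : IsSl2Graded gr E F m n) {d : ℕ} {x : V} (hx : x ∈ gr d) :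
    E (F x) ∈ gr d := by
  cases d with
  | zero => simp [LinearMap.mem_ker.mp (h.lower_zero hx)]
  | succ d => exact h.raise d (h.lower d hx)

theorem lie_mem (h : IsSl2Graded gr E F m n) {d : ℕ} {x : V} (hx : x ∈ gr d) :
    ⁅E, F⁆ x ∈ gr d :=
  sub_mem (h.raise_lower_mem hx) (h.lower d (h.raise d hx))

theorem pow_succ_lower (h : IsSl2Graded gr E F m n) (a : ℕ) (x : V) :
    (E ^ (a + 1)) (F x) = F ((E ^ (a + 1)) x) + (a + 1) • (E ^ a) (⁅E, F⁆ x + a • x) := by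
  rw [map_add, map_nsmul]
  exact LinearMap.congr_fun (pow_succ_mul_of_lie_lie_eq_two_nsmul h.lie_lie a) x

theorem pow_succ_lower_eq_zero (h : IsSl2Graded gr E F m n) {a : ℕ} {x : V}
    (hx : (E ^ a) x = 0) : (E ^ (a + 1)) (F x) = 0 := by
  have hH : ⁅E, F⁆ ((E ^ a) x) = (E ^ a) (⁅E, F⁆ x) + (2 * a) • (E ^ a) x :=
    LinearMap.congr_fun (mul_pow_of_lie_eq_two_nsmul h.lie_lie a) x
  rw [hx, map_zero, smul_zero, add_zero] at hH
  rw [h.pow_succ_lower, pow_succ', Module.End.mul_apply, map_add, map_nsmul, hx, ← hH]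
  simp

variable [CharZero k]

theorem weight_ne_neg {d a : ℕ} (hda : 2 * d + a ∉ Set.Icc m n) {c : ℕ} (hc : c ∈ Set.Icc m n) :
    (2 * (d : k) - c) ≠ -a := by
  intro h
  have : ((2 * d + a : ℕ) : k) = c := by push_cast; linear_combination h
  exact hda (Nat.cast_injective this ▸ hc)

theorem eq_zero_of_lie_add_nsmul_eq_zero (h : IsSl2Graded gr E F m n) {d a : ℕ}
    (hda : 2 * d + a ∉ Set.Icc m n) {x : V} (hx : x ∈ gr d) (h0 : ⁅E, F⁆ x + a • x = 0) :
    x = 0 := by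
  have hneg : x ∈ Module.End.eigenspace ⁅E, F⁆ (-(a : k)) := by
    rw [Module.End.mem_eigenspace_iff, neg_smul, Nat.cast_smul_eq_nsmul]
    exact eq_neg_of_add_eq_zero_left h0
  have hweights : x ∈ ⨆ μ ∈ (fun c : ℕ => 2 * (d : k) - c) '' Set.Icc m n,
      Module.End.eigenspace ⁅E, F⁆ μ := by
    rw [iSup_image]
    exact (h.le_weights d).trans (iSup₂_mono fun _ _ => inf_le_right) hx
  refine Submodule.disjoint_def.mp ((Module.End.eigenspaces_iSupIndep _).disjoint_biSup ?_)
    x hneg hweights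
  rintro ⟨c, hc, hca⟩
  exact weight_ne_neg hda hc hca

theorem exists_lie_add_nsmul_eq (h : IsSl2Graded gr E F m n) {d a : ℕ}
    (hda : 2 * d + a ∉ Set.Icc m n) {x : V} (hx : x ∈ gr d) :
    ∃ v ∈ gr d, ⁅E, F⁆ v + a • v = x := by
  suffices gr d ≤ (gr d).map (⁅E, F⁆ + a • 1) by simpa using this hx
  refine (h.le_weights d).trans (iSup₂_le fun c hc v hv => ?_)
  have hne : 2 * (d : k) - c + a ≠ 0 := fun h0 =>
    weight_ne_neg hda hc (eq_neg_of_add_eq_zero_left h0)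
  refine ⟨(2 * (d : k) - c + a)⁻¹ • v, Submodule.smul_mem _ _ hv.1, ?_⟩
  have hv' : ⁅E, F⁆ v = (2 * (d : k) - c) • v := Module.End.mem_eigenspace_iff.mp hv.2
  rw [map_smul, LinearMap.add_apply, hv', LinearMap.smul_apply, Module.End.one_apply,
    ← Nat.cast_smul_eq_nsmul k, ← add_smul, smul_smul, inv_mul_cancel₀ hne, one_smul]

theorem injective_of_lower_eq_zero (h : IsSl2Graded gr E F m n) {d : ℕ}
    (hF : ∀ a, 2 * d + a ≤ m → ∀ x ∈ gr d, (E ^ a) x = 0 → F x = 0) (a : ℕ)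
    (hda : 2 * d + a ≤ m) : ∀ x ∈ gr d, (E ^ a) x = 0 → x = 0 := by
  induction a with
  | zero => exact fun x _ h0 => h0
  | succ a ih =>
    intro x hx h0
    have hcomm := h.pow_succ_lower a x
    rw [hF _ hda x hx h0, h0, map_zero, map_zero, zero_add, eq_comm] at hcomm
    have hmem : ⁅E, F⁆ x + a • x ∈ gr d := add_mem (h.lie_mem hx) (nsmul_mem hx a)
    rw [← Nat.cast_smul_eq_nsmul k, smul_eq_zero] at hcomm
    have hker := ih (by omega) _ hmem (hcomm.resolve_left (Nat.cast_ne_zero.mpr a.succ_ne_zero))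
    exact h.eq_zero_of_lie_add_nsmul_eq_zero (by simp only [Set.mem_Icc]; omega) hx hker

theorem injective (h : IsSl2Graded gr E F m n) (a d : ℕ) (hda : 2 * d + a ≤ m) :
    ∀ x ∈ gr d, (E ^ a) x = 0 → x = 0 := by
  induction d generalizing a with
  | zero => exact h.injective_of_lower_eq_zero (fun _ _ x hx _ => h.lower_zero hx) a hda
  | succ d ih =>
    refine h.injective_of_lower_eq_zero (fun b hb x hx hbx => ?_) a hda
    exact ih (b + 1) (by omega) _ (h.lower d hx) (h.pow_succ_lower_eq_zero hbx)

theorem le_map_pow_succ (h : IsSl2Graded gr E F m n) {a d : ℕ} (hda : n ≤ 2 * d + (a + 1))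
    (hlow : gr (d + 1 + a) ≤ (gr (d + 1)).map (E ^ a))
    (hhigh : gr (d + (a + 2)) ≤ (gr d).map (E ^ (a + 2))) :
    gr (d + (a + 1)) ≤ (gr d).map (E ^ (a + 1)) := by
  intro w hw
  obtain ⟨u, hu, rfl⟩ := hlow (by rwa [add_right_comm])
  obtain ⟨v, hv, rfl⟩ := h.exists_lie_add_nsmul_eq (a := a)
    (by simp only [Set.mem_Icc]; omega) hu
  obtain ⟨u', hu', hEv⟩ : (E ^ (a + 1)) v ∈ (gr d).map (E ^ (a + 2)) :=
    hhigh <| by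
      simpa only [add_assoc, add_comm, add_left_comm] using pow_mem_of_le_comap h.raise (a + 1) hv
  have hFEv : F ((E ^ (a + 1)) v) ∈ (gr d).map (E ^ (a + 1)) := by
    refine ⟨E (F u') - (a + 2) • (⁅E, F⁆ u' + (a + 1) • u'), sub_mem (h.raise_lower_mem hu')
      (nsmul_mem (add_mem (h.lie_mem hu') (nsmul_mem hu' _)) _), ?_⟩
    rw [map_sub, map_nsmul, ← hEv, ← Module.End.mul_apply, ← pow_succ, h.pow_succ_lower (a + 1)]
    exact add_sub_cancel_right _ _
  have hcomm := h.pow_succ_lower a v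
  have hmem : (a + 1) • (E ^ a) (⁅E, F⁆ v + a • v) ∈ (gr d).map (E ^ (a + 1)) := by
    rw [← sub_eq_iff_eq_add'.mpr hcomm]
    exact sub_mem ⟨F v, h.lower d hv, rfl⟩ hFEv
  rw [← Nat.cast_smul_eq_nsmul k] at hmem
  exact (Submodule.smul_mem_iff _ (Nat.cast_ne_zero.mpr a.succ_ne_zero)).mp hmem

/- Downward induction on the target degree `d + a`, then upward induction on `a`. -/
theorem le_map_pow (h : IsSl2Graded gr E F m n) (a d : ℕ) (hda : n ≤ 2 * d + a) :
    gr (d + a) ≤ (gr d).map (E ^ a) := by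
  suffices ∀ r a d, n < d + a + r → n ≤ 2 * d + a → gr (d + a) ≤ (gr d).map (E ^ a) from
    this (n + 1) a d (by omega) hda
  intro r
  induction r with
  | zero =>
    intro a d hr _
    rw [h.eq_bot (d + a) hr]
    exact bot_le
  | succ r ihr =>
    intro a
    induction a with
    | zero => exact fun d _ _ => (Submodule.map_id _).ge
    | succ a iha =>
      exact fun d hr hda => h.le_map_pow_succ hda (iha (d + 1) (by omega) (by omega))
        (ihr (a + 2) d (by omega) (by omega))

theorem hasLefschetzRange (h : IsSl2Graded gr E F m n) : HasLefschetzRange gr E m n where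
  injective := h.injective
  surjective a d hda _ hw := h.le_map_pow a d hda hw
  eq_bot := h.eq_bot

end IsSl2Graded

/-! ### Tensor products -/

section TensorSum

variable {k M N : Type*} [CommRing k] [AddCommGroup M] [Module k M] [AddCommGroup N] [Module k N]

/-- The action `f ⊗ 1 + 1 ⊗ g` on `M ⊗ N` induced by endomorphisms `f` of `M` and `g` of `N`, under
which `M ⊗ N` is the tensor product of the Lie algebra representations `M` and `N`. -/
noncomputable def tensorSum (f : Module.End k M) (g : Module.End k N) :
    Module.End k (M ⊗[k] N) :=
  f.rTensor N + g.lTensor M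

@[simp]
theorem tensorSum_tmul (f : Module.End k M) (g : Module.End k N) (x : M) (y : N) :
    tensorSum f g (x ⊗ₜ[k] y) = f x ⊗ₜ[k] y + x ⊗ₜ[k] g y :=
  rfl

theorem tensorSum_nsmul (a : ℕ) (f : Module.End k M) (g : Module.End k N) :
    tensorSum (a • f) (a • g) = a • tensorSum f g := by
  refine TensorProduct.ext' fun x y => ?_
  simp only [tensorSum_tmul, LinearMap.smul_apply, TensorProduct.tmul_smul, smul_add,
    TensorProduct.smul_tmul']

theorem lie_tensorSum (f f' : Module.End k M) (g g' : Module.End k N) :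
    ⁅tensorSum f g, tensorSum f' g'⁆ = tensorSum ⁅f, f'⁆ ⁅g, g'⁆ := by
  refine TensorProduct.ext' fun x y => ?_
  simp only [LinearMap.sub_apply, Ring.lie_def, Module.End.mul_apply, tensorSum_tmul, map_add,
    TensorProduct.sub_tmul, TensorProduct.tmul_sub]
  abel

theorem tmul_mem_of_mem_biSup {ι κ : Type*} {s : Set ι} {t : Set κ} {p : ι → Submodule k M}
    {q : κ → Submodule k N} {W : Submodule k (M ⊗[k] N)}
    (h : ∀ i ∈ s, ∀ j ∈ t, ∀ x ∈ p i, ∀ y ∈ q j, x ⊗ₜ[k] y ∈ W) {x : M} {y : N}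
    (hx : x ∈ ⨆ i ∈ s, p i) (hy : y ∈ ⨆ j ∈ t, q j) : x ⊗ₜ[k] y ∈ W := by
  refine (iSup₂_le (f := fun i _ => p i) fun i hi x' hx' => ?_ :
    _ ≤ W.comap ((TensorProduct.mk k M N).flip y)) hx
  exact (iSup₂_le (f := fun j _ => q j) fun j hj y' hy' => h i hi j hj x' hx' y' hy' :
    _ ≤ W.comap (TensorProduct.mk k M N x')) hy

theorem tmul_mem_eigenspace_tensorSum {f : Module.End k M} {g : Module.End k N} {μ ν : k} {x : M}
    {y : N} (hx : x ∈ Module.End.eigenspace f μ) (hy : y ∈ Module.End.eigenspace g ν) :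
    x ⊗ₜ[k] y ∈ Module.End.eigenspace (tensorSum f g) (μ + ν) := by
  rw [Module.End.mem_eigenspace_iff] at *
  rw [tensorSum_tmul, hx, hy, TensorProduct.tmul_smul, ← TensorProduct.smul_tmul', add_smul]

end TensorSum

section TensorGrading

variable {k M N : Type*} [Field k] [AddCommGroup M] [Module k M] [AddCommGroup N] [Module k N]
  {grM : ℕ → Submodule k M} {grN : ℕ → Submodule k N}

theorem tmul_mem_tensorGr {d₁ d₂ d : ℕ} (hd : d₁ + d₂ = d) {x : M} {y : N} (hx : x ∈ grM d₁)
    (hy : y ∈ grN d₂) : x ⊗ₜ[k] y ∈ tensorGr grM grN d :=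
  Submodule.subset_span ⟨d₁, d₂, x, y, hd, hx, hy, rfl⟩

theorem tensorGr_le_iff {d : ℕ} {W : Submodule k (M ⊗[k] N)} :
    tensorGr grM grN d ≤ W ↔
      ∀ d₁ d₂, d₁ + d₂ = d → ∀ x ∈ grM d₁, ∀ y ∈ grN d₂, x ⊗ₜ[k] y ∈ W := by
  refine ⟨fun h d₁ d₂ hd x hx y hy => h (tmul_mem_tensorGr hd hx hy), fun h => ?_⟩
  rw [tensorGr, Submodule.span_le]
  rintro _ ⟨d₁, d₂, x, y, hd, hx, hy, rfl⟩
  exact h d₁ d₂ hd x hx y hy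

end TensorGrading

namespace IsSl2Graded

variable {k M N : Type*} [Field k] [AddCommGroup M] [Module k M] [AddCommGroup N] [Module k N]
  {grM : ℕ → Submodule k M} {grN : ℕ → Submodule k N} {E F : Module.End k M}
  {E' F' : Module.End k N} {m n m' n' : ℕ}

theorem tensor_lower_mem (h : IsSl2Graded grM E F m n) (h' : IsSl2Graded grN E' F' m' n')
    {d₁ d₂ d : ℕ} (hd : d₁ + d₂ = d + 1) {x : M} (hx : x ∈ grM d₁) {y : N} (hy : y ∈ grN d₂) :
    tensorSum F F' (x ⊗ₜ[k] y) ∈ tensorGr grM grN d := by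
  rw [tensorSum_tmul]
  refine add_mem ?_ ?_
  · cases d₁ with
    | zero => simp [LinearMap.mem_ker.mp (h.lower_zero hx)]
    | succ d₁ => exact tmul_mem_tensorGr (by omega) (h.lower _ hx) hy
  · cases d₂ with
    | zero => simp [LinearMap.mem_ker.mp (h'.lower_zero hy)]
    | succ d₂ => exact tmul_mem_tensorGr (by omega) hx (h'.lower _ hy)

theorem tensor_le_weights (h : IsSl2Graded grM E F m n) (h' : IsSl2Graded grN E' F' m' n')
    (d : ℕ) :
    tensorGr grM grN d ≤ ⨆ c ∈ Set.Icc (m + m') (n + n'), tensorGr grM grN d ⊓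
      Module.End.eigenspace ⁅tensorSum E E', tensorSum F F'⁆ (2 * (d : k) - (c : k)) := by
  refine tensorGr_le_iff.mpr fun d₁ d₂ hd x hx y hy =>
    tmul_mem_of_mem_biSup ?_ (h.le_weights d₁ hx) (h'.le_weights d₂ hy)
  intro c hc c' hc' x hx y hy
  refine Submodule.mem_iSup_of_mem (c + c') <| Submodule.mem_iSup_of_mem
    ⟨add_le_add hc.1 hc'.1, add_le_add hc.2 hc'.2⟩ ⟨tmul_mem_tensorGr hd hx.1 hy.1, ?_⟩
  have hweight : 2 * (d : k) - ((c + c' : ℕ) : k) = (2 * d₁ - c) + (2 * d₂ - c') := by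
    rw [← hd]
    push_cast
    ring
  rw [lie_tensorSum, hweight]
  exact tmul_mem_eigenspace_tensorSum hx.2 hy.2

theorem tensor (h : IsSl2Graded grM E F m n) (h' : IsSl2Graded grN E' F' m' n') :
    IsSl2Graded (tensorGr grM grN) (tensorSum E E') (tensorSum F F') (m + m') (n + n') where
  raise d := tensorGr_le_iff.mpr fun d₁ d₂ hd x hx y hy =>
    add_mem (tmul_mem_tensorGr (by omega) (h.raise _ hx) hy)
      (tmul_mem_tensorGr (by omega) hx (h'.raise _ hy))
  lower d := tensorGr_le_iff.mpr fun d₁ d₂ hd x hx y hy => h.tensor_lower_mem h' hd hx hy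
  lower_zero := tensorGr_le_iff.mpr fun d₁ d₂ hd x hx y hy => by
    obtain ⟨rfl, rfl⟩ := add_eq_zero.mp hd
    rw [LinearMap.mem_ker, tensorSum_tmul, LinearMap.mem_ker.mp (h.lower_zero hx),
      LinearMap.mem_ker.mp (h'.lower_zero hy), TensorProduct.zero_tmul, TensorProduct.tmul_zero,
      add_zero]
  lie_lie := by
    rw [lie_tensorSum, lie_tensorSum, h.lie_lie, h'.lie_lie, tensorSum_nsmul]
  le_weights := h.tensor_le_weights h'
  eq_bot d hd := by
    refine (tensorGr_le_iff.mpr fun d₁ d₂ hd' x hx y hy => ?_).antisymm bot_le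
    obtain hd₁ | hd₂ : n < d₁ ∨ n' < d₂ := by omega
    · rw [(Submodule.mem_bot k).mp ((h.eq_bot d₁ hd₁).le hx), TensorProduct.zero_tmul]
      exact zero_mem _
    · rw [(Submodule.mem_bot k).mp ((h'.eq_bot d₂ hd₂).le hy), TensorProduct.tmul_zero]
      exact zero_mem _

end IsSl2Graded

/-! ### Decompositions into strings -/

/-- The string spanned by the `f ^ j (e α)`, `j < dv α`, sits in degrees
`iv α, …, iv α + dv α - 1`; `CentersBetween iv dv m n` says that `m` and `n` bound the sum
`2 * iv α + dv α - 1` of its two end degrees, i.e. twice its centre. -/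
def CentersBetween {Λ : Type*} (iv dv : Λ → ℕ) (m n : ℕ) : Prop :=
  ∀ α, m + 1 ≤ 2 * iv α + dv α ∧ 2 * iv α + dv α ≤ n + 1

theorem CentersBetween.almostCentered {Λ : Type*} {iv dv : Λ → ℕ} {m n : ℕ}
    (h : CentersBetween iv dv m n) (hmn : n ≤ m + 1) : AlmostCentered iv dv := by
  intro α β _
  obtain ⟨hα, hα'⟩ := h α
  obtain ⟨hβ, hβ'⟩ := h β
  rw [abs_le]
  omega

namespace HasLefschetzRange

variable {k V : Type*} [Field k] [AddCommGroup V] [Module k V] {gr : ℕ → Submodule k V}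
  {f : Module.End k V} {m n : ℕ}

theorem isSLEnd (h : HasLefschetzRange gr f m n) (hmn : n ≤ m + 1) : IsSLEnd gr f := by
  intro a d
  obtain hm | hn : 2 * d + a ≤ m ∨ n ≤ 2 * d + a := by omega
  · exact Or.inl (h.injective a d hm)
  · exact Or.inr (h.surjective a d hn)

end HasLefschetzRange

namespace IsDecompEnd

variable {k V : Type*} [Field k] [AddCommGroup V] [Module k V] {gr : ℕ → Submodule k V}
  {f : Module.End k V} {Λ : Type*} {iv dv : Λ → ℕ} {e : Λ → V}

/-- The basis of `V` consisting of the vectors `f ^ j (e α)`, `j < dv α`, of a decomposition. -/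
noncomputable def basis (h : IsDecompEnd gr f iv dv e) :
    Module.Basis (Σ α : Λ, Fin (dv α)) k V :=
  Module.Basis.mk h.2.2.2.1 h.2.2.2.2.ge

theorem basis_apply (h : IsDecompEnd gr f iv dv e) (α : Λ) (j : Fin (dv α)) :
    h.basis ⟨α, j⟩ = (f ^ (j : ℕ)) (e α) :=
  Module.Basis.mk_apply ..

theorem pow_apply_ne_zero (h : IsDecompEnd gr f iv dv e) {α : Λ} {j : ℕ} (hj : j < dv α) :
    (f ^ j) (e α) ≠ 0 :=
  h.2.2.2.1.ne_zero (⟨α, ⟨j, hj⟩⟩ : Σ α, Fin (dv α))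

theorem pow_apply_eq_zero (h : IsDecompEnd gr f iv dv e) {α : Λ} {j : ℕ} (hj : dv α ≤ j) :
    (f ^ j) (e α) = 0 :=
  Module.End.pow_map_zero_of_le hj (h.2.2.1 α)

theorem pow_apply_mem (h : IsDecompEnd gr f iv dv e) (α : Λ) (j : ℕ) :
    (f ^ j) (e α) ∈ gr (iv α + j) := by
  obtain hj | hj := lt_or_ge j (dv α)
  · exact h.2.1 α j hj
  · rw [h.pow_apply_eq_zero hj]
    exact zero_mem _

theorem linearMap_ext {W : Type*} [AddCommGroup W] [Module k W] (h : IsDecompEnd gr f iv dv e)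
    {φ ψ : V →ₗ[k] W} (hφψ : ∀ α j, φ ((f ^ j) (e α)) = ψ ((f ^ j) (e α))) : φ = ψ :=
  h.basis.ext fun ⟨α, j⟩ => by rw [basis_apply, hφψ]

theorem grading_le_of_pow_apply_mem (hgr : DirectSum.IsInternal gr) (h : IsDecompEnd gr f iv dv e)
    {d : ℕ} {W : Submodule k V} (hW : ∀ α j, iv α + j = d → (f ^ j) (e α) ∈ W) : gr d ≤ W := by
  let S (i : ℕ) : Submodule k V :=
    Submodule.span k {v | ∃ α j, iv α + j = i ∧ (f ^ j) (e α) = v}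
  have hS_le : S ≤ gr := fun i => Submodule.span_le.mpr <| by
    rintro _ ⟨α, j, rfl, rfl⟩
    exact h.pow_apply_mem α j
  have hS_top : ⨆ i, S i = ⊤ := by
    rw [eq_top_iff, ← h.2.2.2.2, Submodule.span_le]
    rintro _ ⟨⟨α, j⟩, rfl⟩
    exact Submodule.mem_iSup_of_mem (iv α + j) (Submodule.subset_span ⟨α, j, rfl, rfl⟩)
  rw [← (hgr.submodule_iSupIndep.le_iff_eq_of_iSup_eq_top hS_top).mp hS_le, Submodule.span_le]
  rintro _ ⟨α, j, hd, rfl⟩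
  exact hW α j hd

theorem grading_le_comap (hgr : DirectSum.IsInternal gr) (h : IsDecompEnd gr f iv dv e) (d : ℕ) :
    gr d ≤ (gr (d + 1)).comap f := by
  refine h.grading_le_of_pow_apply_mem hgr fun α j hd => ?_
  rw [Submodule.mem_comap, ← Module.End.mul_apply, ← pow_succ', ← hd]
  exact h.pow_apply_mem α (j + 1)

theorem grading_eq_bot (hgr : DirectSum.IsInternal gr) (h : IsDecompEnd gr f iv dv e) {m n : ℕ}
    (hc : CentersBetween iv dv m n) {d : ℕ} (hd : n < d) : gr d = ⊥ := by
  refine eq_bot_iff.mpr (h.grading_le_of_pow_apply_mem hgr fun α j hj => ?_)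
  rw [Submodule.mem_bot]
  exact h.pow_apply_eq_zero (by have := (hc α).2; omega)

/-- The operator that, together with `f`, makes each string of the decomposition the irreducible
representation of `sl₂` whose lowest weight vector is `e α`. -/
noncomputable def lowering (h : IsDecompEnd gr f iv dv e) : Module.End k V :=
  h.basis.constr k fun q => ((q.2 : ℕ) * (dv q.1 - q.2)) • (f ^ ((q.2 : ℕ) - 1)) (e q.1)

/- Beyond the end of the string, for `dv α ≤ j`, the truncated `dv α - j` vanishes. -/
theorem lowering_pow_apply (h : IsDecompEnd gr f iv dv e) (α : Λ) (j : ℕ) :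
    h.lowering ((f ^ j) (e α)) = (j * (dv α - j)) • (f ^ (j - 1)) (e α) := by
  obtain hj | hj := lt_or_ge j (dv α)
  · rw [← h.basis_apply α ⟨j, hj⟩, lowering, Module.Basis.constr_basis]
  · rw [h.pow_apply_eq_zero hj, Nat.sub_eq_zero_of_le hj, map_zero, mul_zero, zero_smul]

theorem lie_lowering_pow_apply (h : IsDecompEnd gr f iv dv e) (α : Λ) (j : ℕ) :
    ⁅f, h.lowering⁆ ((f ^ j) (e α)) = (2 * (j : k) + 1 - dv α) • (f ^ j) (e α) := by
  have hup : f (h.lowering ((f ^ j) (e α))) = (j * (dv α - j)) • (f ^ j) (e α) := by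
    rw [lowering_pow_apply, map_nsmul]
    cases j with
    | zero => simp
    | succ j => rw [Nat.add_sub_cancel, ← Module.End.mul_apply, ← pow_succ']
  have hdown : h.lowering (f ((f ^ j) (e α))) = ((j + 1) * (dv α - (j + 1))) • (f ^ j) (e α) := by
    rw [show f ((f ^ j) (e α)) = (f ^ (j + 1)) (e α) by rw [pow_succ', Module.End.mul_apply],
      lowering_pow_apply, Nat.add_sub_cancel]
  rw [Ring.lie_def, LinearMap.sub_apply, Module.End.mul_apply, Module.End.mul_apply, hup, hdown]
  obtain hj | hj := lt_or_ge j (dv α)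
  · obtain ⟨r, hr⟩ := Nat.exists_eq_add_of_lt hj
    rw [show dv α - j = r + 1 by omega, show dv α - (j + 1) = r by omega, hr]
    push_cast
    module
  · simp [h.pow_apply_eq_zero hj]

theorem lie_lie_lowering (h : IsDecompEnd gr f iv dv e) : ⁅⁅f, h.lowering⁆, f⁆ = 2 • f := by
  refine h.linearMap_ext fun α j => ?_
  rw [Ring.lie_def, LinearMap.sub_apply, Module.End.mul_apply, Module.End.mul_apply,
    show f ((f ^ j) (e α)) = (f ^ (j + 1)) (e α) by rw [pow_succ', Module.End.mul_apply],
    lie_lowering_pow_apply, lie_lowering_pow_apply, map_smul, LinearMap.smul_apply,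
    ← Module.End.mul_apply, ← pow_succ']
  push_cast
  module

theorem grading_le_weights (hgr : DirectSum.IsInternal gr) (h : IsDecompEnd gr f iv dv e) {m n : ℕ}
    (hc : CentersBetween iv dv m n) (d : ℕ) :
    gr d ≤ ⨆ c ∈ Set.Icc m n,
      gr d ⊓ Module.End.eigenspace ⁅f, h.lowering⁆ (2 * (d : k) - (c : k)) := by
  refine h.grading_le_of_pow_apply_mem hgr fun α j hj => ?_
  obtain ⟨c, hcα⟩ : ∃ c, 2 * iv α + dv α = c + 1 :=
    ⟨2 * iv α + dv α - 1, by have := h.1 α; omega⟩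
  have hmem : c ∈ Set.Icc m n := by
    have := hc α
    constructor <;> omega
  have hweight : 2 * (d : k) - c = 2 * j + 1 - dv α := by
    have hcα' := congrArg (Nat.cast (R := k)) hcα
    rw [← hj]
    push_cast at hcα' ⊢
    linear_combination hcα'
  refine Submodule.mem_iSup_of_mem c <| Submodule.mem_iSup_of_mem hmem
    ⟨hj ▸ h.pow_apply_mem α j, Module.End.mem_eigenspace_iff.mpr ?_⟩
  rw [lie_lowering_pow_apply, hweight]

theorem isSl2Graded (hgr : DirectSum.IsInternal gr) (h : IsDecompEnd gr f iv dv e) {m n : ℕ}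
    (hc : CentersBetween iv dv m n) : IsSl2Graded gr f h.lowering m n where
  raise := h.grading_le_comap hgr
  lower d := h.grading_le_of_pow_apply_mem hgr fun α j hj => by
    rw [Submodule.mem_comap, lowering_pow_apply]
    cases j with
    | zero => simp
    | succ j =>
      obtain rfl : iv α + j = d := by omega
      exact nsmul_mem (h.pow_apply_mem α j) _
  lower_zero := h.grading_le_of_pow_apply_mem hgr fun α j hj => by
    obtain rfl : j = 0 := by omega
    rw [LinearMap.mem_ker, lowering_pow_apply, zero_mul, zero_smul]
  lie_lie := h.lie_lie_lowering
  le_weights := h.grading_le_weights hgr hc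
  eq_bot _ hd := h.grading_eq_bot hgr hc hd

theorem pow_apply_ne_top (h : IsDecompEnd gr f iv dv e) {β : Λ} {a : ℕ} (ha : dv β ≤ a) (u : V) :
    (f ^ a) u ≠ (f ^ (dv β - 1)) (e β) := by
  classical
  have hβ := h.1 β
  let top : Σ α, Fin (dv α) := ⟨β, ⟨dv β - 1, by omega⟩⟩
  have htop : h.basis top = (f ^ (dv β - 1)) (e β) := h.basis_apply ..
  have hcoord : h.basis.coord top ∘ₗ f ^ a = 0 := by
    refine h.basis.ext ?_
    rintro ⟨α, j⟩
    rw [LinearMap.comp_apply, h.basis_apply, ← Module.End.mul_apply, ← pow_add]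
    obtain hj | hj := lt_or_ge (a + j) (dv α)
    · rw [← h.basis_apply α ⟨a + j, hj⟩, Module.Basis.coord_apply, Module.Basis.repr_self,
        LinearMap.zero_apply, Finsupp.single_eq_of_ne]
      intro heq
      obtain ⟨rfl, heq⟩ := Sigma.mk.inj heq
      have := congrArg Fin.val (eq_of_heq heq)
      dsimp only at this
      omega
    · rw [h.pow_apply_eq_zero hj, map_zero, LinearMap.zero_apply]
  intro hu
  have hzero := LinearMap.congr_fun hcoord u
  rw [LinearMap.comp_apply, hu, ← htop, Module.Basis.coord_apply, Module.Basis.repr_self,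
    Finsupp.single_eq_same] at hzero
  exact one_ne_zero hzero

theorem centersBetween (h : IsDecompEnd gr f iv dv e) {m n : ℕ}
    (hf : HasLefschetzRange gr f m n) : CentersBetween iv dv m n := by
  refine fun α => ⟨?_, ?_⟩
  · by_contra! hlt
    exact h.pow_apply_ne_zero (h.1 α)
      (hf.injective (dv α) (iv α) (by omega) _ (h.pow_apply_mem α 0) (h.2.2.1 α))
  · by_contra! hlt
    have hα := h.1 α
    have htop := h.pow_apply_mem α (dv α - 1)
    obtain h0 | hpos := Nat.eq_zero_or_pos (iv α)
    · rw [hf.eq_bot _ (by omega), Submodule.mem_bot] at htop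
      exact h.pow_apply_ne_zero (by omega) htop
    · rw [show iv α + (dv α - 1) = iv α - 1 + dv α by omega] at htop
      obtain ⟨x, -, hx⟩ := hf.surjective (dv α) (iv α - 1) (by omega) _ htop
      exact h.pow_apply_ne_top le_rfl x hx

theorem not_nested (h : IsDecompEnd gr f iv dv e) (hf : IsSLEnd gr f) (α β : Λ) :
    ¬(iv α < iv β ∧ dv α + iv α < dv β + iv β) := by
  rintro ⟨hstart, hend⟩
  have hα := h.1 α
  have hβ := h.1 β
  obtain ⟨a, ha⟩ : ∃ a, iv α + a = iv β + (dv β - 1) := ⟨iv β + (dv β - 1) - iv α, by omega⟩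
  obtain hinj | hsurj := hf a (iv α)
  · exact h.pow_apply_ne_zero hα
      (hinj _ (h.pow_apply_mem α 0) (h.pow_apply_eq_zero (by omega)))
  · obtain ⟨x, -, hx⟩ := hsurj _ (ha ▸ h.pow_apply_mem β (dv β - 1))
    exact h.pow_apply_ne_top (by omega) x hx

theorem exists_centersBetween (h : IsDecompEnd gr f iv dv e) (hf : IsSLEnd gr f)
    (hac : AlmostCentered iv dv) : ∃ c, CentersBetween iv dv c (c + 1) := by
  have hclose (α β : Λ) : 2 * iv α + dv α ≤ 2 * iv β + dv β + 1 := by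
    have hβα := h.not_nested hf β α
    by_cases hβ : Prec iv dv β α
    · have := abs_le.mp (hac α β hβ)
      omega
    · by_cases hα : Prec iv dv α β
      · have := abs_le.mp (hac β α hα)
        omega
      · unfold Prec at hα hβ
        omega
  obtain _ | _ := isEmpty_or_nonempty Λ
  · exact ⟨0, isEmptyElim⟩
  · let β := Function.argmin fun α => 2 * iv α + dv α
    refine ⟨2 * iv β + dv β - 1, fun α => ?_⟩
    have hβ := h.1 β
    have hmin : 2 * iv β + dv β ≤ 2 * iv α + dv α :=
      Function.argmin_le (fun α => 2 * iv α + dv α) α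
    have := hclose α β
    omega

end IsDecompEnd

/-! ### Decomposing a space with symmetric Hilbert function -/

section Symmetric

variable {k V : Type*} [Field k] [AddCommGroup V] [Module k V] {gr : ℕ → Submodule k V}
  {f : Module.End k V}

theorem IsSLEnd.bijective_of_finrank_eq (hf : IsSLEnd gr f) {a d : ℕ}
    [FiniteDimensional k (gr d)] [FiniteDimensional k (gr (d + a))]
    (hmaps : ∀ x ∈ gr d, (f ^ a) x ∈ gr (d + a))
    (heq : Module.finrank k (gr d) = Module.finrank k (gr (d + a))) :
    Function.Bijective ((f ^ a).restrict hmaps) := by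
  have hiff := LinearMap.injective_iff_surjective_of_finrank_eq_finrank heq
    (f := (f ^ a).restrict hmaps)
  suffices Function.Injective ((f ^ a).restrict hmaps) from ⟨this, hiff.mp this⟩
  obtain hinj | hsurj := hf a d
  · refine (injective_iff_map_eq_zero _).mpr fun x hx => Subtype.ext ?_
    exact hinj x x.2 (congrArg Subtype.val hx)
  · refine hiff.mpr fun w => ?_
    obtain ⟨x, hx, hxw⟩ := hsurj w w.2
    exact ⟨⟨x, hx⟩, Subtype.ext hxw⟩

theorem IsSLEnd.hasLefschetzRange_of_symmetric [∀ d, FiniteDimensional k (gr d)]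
    (hf : IsSLEnd gr f) (hdeg : ∀ d, gr d ≤ (gr (d + 1)).comap f) {p : ℕ}
    (hsym : ∀ d ≤ p, Module.finrank k (gr d) = Module.finrank k (gr (p - d)))
    (hbot : ∀ d, p < d → gr d = ⊥) : HasLefschetzRange gr f p p := by
  have hbij (a d : ℕ) (hda : 2 * d + a = p) :=
    hf.bijective_of_finrank_eq (fun x hx => pow_mem_of_le_comap hdeg a hx)
      (by rw [hsym d (by omega), show p - d = d + a by omega])
  refine ⟨fun a d hda x hx h0 => ?_, fun a d hda w hw => ?_, hbot⟩
  · have hinj := (hbij (p - 2 * d) d (by omega)).injective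
    have hpow := Module.End.pow_map_zero_of_le (show a ≤ p - 2 * d by omega) h0
    exact congrArg Subtype.val ((injective_iff_map_eq_zero _).mp hinj ⟨x, hx⟩ (Subtype.ext hpow))
  · obtain hle | hlt := le_or_gt (d + a) p
    · obtain ⟨d', b, rfl, hd'⟩ : ∃ d' b, d = d' + b ∧ 2 * d' + (a + b) = p :=
        ⟨p - (d + a), 2 * d + a - p, by omega, by omega⟩
      obtain ⟨⟨x, hx⟩, hxw⟩ := (hbij (a + b) d' hd').surjective
        ⟨w, by rwa [add_comm a, ← add_assoc]⟩
      refine ⟨(f ^ b) x, pow_mem_of_le_comap hdeg b hx, ?_⟩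
      rw [← Module.End.mul_apply, ← pow_add]
      exact congrArg Subtype.val hxw
    · rw [hbot _ hlt, Submodule.mem_bot] at hw
      exact ⟨0, zero_mem _, by rw [map_zero, hw]⟩

end Symmetric

section Strings

variable {k V Λ : Type*} [Ring k] [AddCommGroup V] [Module k V] {f : Module.End k V} {dv : Λ → ℕ}
  {e : Λ → V}

theorem pow_sum_smul_pow_apply (hzero : ∀ α, (f ^ dv α) (e α) = 0)
    (s : Finset (Σ α : Λ, Fin (dv α))) (g : (Σ α : Λ, Fin (dv α)) → k) (r : ℕ)
    (hg : ∀ q ∈ s, r < dv q.1 - 1 - q.2 → g q = 0) :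
    (f ^ r) (∑ q ∈ s, g q • (f ^ (q.2 : ℕ)) (e q.1)) =
      ∑ q ∈ s with dv q.1 - 1 - q.2 = r, g q • (f ^ (dv q.1 - 1)) (e q.1) := by
  rw [map_sum, Finset.sum_filter]
  refine Finset.sum_congr rfl fun q hq => ?_
  have hq2 := q.2.2
  rw [map_smul, ← Module.End.mul_apply, ← pow_add]
  obtain hlt | heq | hgt := lt_trichotomy (dv q.1 - 1 - q.2) r
  · rw [if_neg hlt.ne, Module.End.pow_map_zero_of_le (by omega) (hzero q.1), smul_zero]
  · rw [if_pos heq, show r + (q.2 : ℕ) = dv q.1 - 1 by omega]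
  · rw [if_neg hgt.ne', hg q hq hgt, zero_smul]

/- Apply `f ^ r`, where `r` is the largest distance to the top of a string among the vectors
occurring in a relation: only the tops of some strings survive. -/
theorem linearIndependent_pow_apply_of_top (hzero : ∀ α, (f ^ dv α) (e α) = 0)
    (htop : LinearIndependent k fun α => (f ^ (dv α - 1)) (e α)) :
    LinearIndependent k fun q : Σ α : Λ, Fin (dv α) => (f ^ (q.2 : ℕ)) (e q.1) := by
  classical
  refine linearIndependent_iff'.mpr fun s g hsum => ?_
  by_contra! hne
  obtain ⟨q, hqs, hq⟩ := hne
  obtain ⟨q₀, hq₀, hmax⟩ := (s.filter (g · ≠ 0)).exists_max_image (fun q => dv q.1 - 1 - q.2)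
    ⟨q, Finset.mem_filter.mpr ⟨hqs, hq⟩⟩
  let r := dv q₀.1 - 1 - q₀.2
  have hlayer : ∑ q ∈ s with dv q.1 - 1 - q.2 = r, g q • (f ^ (dv q.1 - 1)) (e q.1) = 0 := by
    rw [← pow_sum_smul_pow_apply hzero s g r fun q hqs hlt => ?_, hsum, map_zero]
    by_contra hq
    exact hlt.not_ge (hmax q (Finset.mem_filter.mpr ⟨hqs, hq⟩))
  have hinj : Function.Injective
      fun q : ↥{q ∈ s | dv q.1 - 1 - q.2 = r} => (q : Σ α : Λ, Fin (dv α)).1 := by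
    rintro ⟨⟨α, i⟩, hi⟩ ⟨⟨β, j⟩, hj⟩ (rfl : α = β)
    have hij := (Finset.mem_filter.mp hi).2.trans (Finset.mem_filter.mp hj).2.symm
    obtain rfl : i = j := Fin.ext (by dsimp only at hij; omega)
    rfl
  have hindep : LinearIndepOn k (fun q : Σ α : Λ, Fin (dv α) => (f ^ (dv q.1 - 1)) (e q.1))
      ({q ∈ s | dv q.1 - 1 - q.2 = r} : Finset _) :=
    htop.comp _ hinj
  obtain ⟨hq₀s, hgq₀⟩ := Finset.mem_filter.mp hq₀
  exact hgq₀ (linearIndepOn_finset_iff.mp hindep g hlayer q₀ (Finset.mem_filter.mpr ⟨hq₀s, rfl⟩))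

theorem span_pow_apply_le_comap (hzero : ∀ α, (f ^ dv α) (e α) = 0) :
    Submodule.span k (Set.range fun q : Σ α : Λ, Fin (dv α) => (f ^ (q.2 : ℕ)) (e q.1)) ≤
      (Submodule.span k
        (Set.range fun q : Σ α : Λ, Fin (dv α) => (f ^ (q.2 : ℕ)) (e q.1))).comap f := by
  refine Submodule.span_le.mpr ?_
  rintro _ ⟨⟨α, j⟩, rfl⟩
  rw [SetLike.mem_coe, Submodule.mem_comap, ← Module.End.mul_apply, ← pow_succ']
  obtain hj | hj := lt_or_ge (j + 1 : ℕ) (dv α)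
  · exact Submodule.subset_span ⟨⟨α, ⟨j + 1, hj⟩⟩, rfl⟩
  · rw [Module.End.pow_map_zero_of_le hj (hzero α)]
    exact zero_mem _

end Strings

/-- The primitive part in degree `i` of a graded space whose raising operator `f` has centre of
symmetry `p / 2`: the homogeneous vectors of degree `i` that generate strings reaching at most
degree `p - i`. -/
def primitivePart {k V : Type*} [Field k] [AddCommGroup V] [Module k V] (gr : ℕ → Submodule k V)
    (f : Module.End k V) (p i : ℕ) : Submodule k V :=
  gr i ⊓ LinearMap.ker (f ^ (p - 2 * i + 1))

namespace HasLefschetzRange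

universe u v

variable {k : Type u} {V : Type v} [Field k] [AddCommGroup V] [Module k V]
  {gr : ℕ → Submodule k V} {f : Module.End k V} {p : ℕ}

theorem grading_succ_le_map_sup_primitivePart (h : HasLefschetzRange gr f p p)
    (hdeg : ∀ d, gr d ≤ (gr (d + 1)).comap f) {i : ℕ} (hi : 2 * (i + 1) ≤ p) :
    gr (i + 1) ≤ (gr i).map f ⊔ primitivePart gr f p (i + 1) := by
  intro x hx
  obtain ⟨a, ha⟩ : ∃ a, p - 2 * (i + 1) + 1 = a := ⟨_, rfl⟩
  have hfx : (f ^ a) x ∈ gr (i + (a + 1)) := by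
    rw [add_comm a, ← add_assoc]
    exact pow_mem_of_le_comap hdeg a hx
  obtain ⟨u, hu, hux⟩ := h.surjective (a + 1) i (by omega) _ hfx
  rw [pow_succ, Module.End.mul_apply] at hux
  have hprim : x - f u ∈ primitivePart gr f p (i + 1) :=
    ⟨sub_mem hx (hdeg i hu), by
      rw [ha]
      exact LinearMap.mem_ker.mpr (by rw [map_sub, hux, sub_self])⟩
  rw [← add_sub_cancel (f u) x]
  exact Submodule.add_mem_sup ⟨u, hu, rfl⟩ hprim

theorem grading_le_of_primitivePart_le (h : HasLefschetzRange gr f p p)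
    (hdeg : ∀ d, gr d ≤ (gr (d + 1)).comap f) {S : Submodule k V} (hS : S ≤ S.comap f)
    (hprim : ∀ i, 2 * i ≤ p → primitivePart gr f p i ≤ S) (d : ℕ) : gr d ≤ S := by
  induction d with
  | zero =>
    refine le_trans ?_ (hprim 0 (Nat.zero_le _))
    refine le_inf le_rfl fun x hx => ?_
    have hfx := pow_mem_of_le_comap hdeg (p + 1) hx
    rwa [h.eq_bot _ (by omega), Submodule.mem_bot] at hfx
  | succ d ih =>
    have hmap : (gr d).map f ≤ S := Submodule.map_le_iff_le_comap.mpr (ih.trans hS)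
    obtain hd | hd := le_or_gt (2 * (d + 1)) p
    · exact (h.grading_succ_le_map_sup_primitivePart hdeg hd).trans (sup_le hmap (hprim _ hd))
    · intro w hw
      obtain ⟨x, hx, hxw⟩ := h.surjective 1 d (by omega) w hw
      exact hmap ⟨x, hx, by rwa [pow_one] at hxw⟩

theorem linearIndependent_pow_apply (h : HasLefschetzRange gr f p p) (hgr : iSupIndep gr)
    (hdeg : ∀ d, gr d ≤ (gr (d + 1)).comap f) {κ : {i : ℕ // 2 * i ≤ p} → Type*}
    {b : ∀ i, κ i → V} (hmem : ∀ (i : {i : ℕ // 2 * i ≤ p}) j, b i j ∈ gr i)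
    (hb : ∀ i, LinearIndependent k (b i)) :
    LinearIndependent k fun q : Σ i, κ i => (f ^ (p - 2 * (q.1 : ℕ))) (b q.1 q.2) := by
  have hspan (i : {i : ℕ // 2 * i ≤ p}) : Submodule.span k (Set.range (b i)) ≤ gr i :=
    Submodule.span_le.mpr (Set.range_subset_iff.mpr (hmem i))
  have hspan' (i : {i : ℕ // 2 * i ≤ p}) :
      Submodule.span k (Set.range fun j => (f ^ (p - 2 * (i : ℕ))) (b i j)) ≤ gr (p - i) := by
    refine Submodule.span_le.mpr (Set.range_subset_iff.mpr fun j => ?_)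
    have := pow_mem_of_le_comap hdeg (p - 2 * (i : ℕ)) (hmem i j)
    rwa [show (i : ℕ) + (p - 2 * i) = p - i by have := i.2; omega] at this
  refine linearIndependent_iUnion_finite
    (f := fun (i : {i : ℕ // 2 * i ≤ p}) j => (f ^ (p - 2 * (i : ℕ))) (b i j))
    (fun i => (hb i).map (Submodule.disjoint_def.mpr fun x hx hx0 => ?_)) fun i t _ hit => ?_
  · exact h.injective _ i (by have := i.2; omega) x (hspan i hx) hx0
  · have hreflect : Function.Injective fun i : {i : ℕ // 2 * i ≤ p} => p - (i : ℕ) := by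
      rintro ⟨i, hi⟩ ⟨j, hj⟩ (hij : p - i = p - j)
      exact Subtype.ext (by dsimp only; omega)
    exact ((hgr.comp hreflect).disjoint_biSup hit).mono (hspan' i)
      (iSup₂_mono fun j _ => hspan' j)

theorem isDecompEnd_of_basis (h : HasLefschetzRange gr f p p) (hgr : DirectSum.IsInternal gr)
    (hdeg : ∀ d, gr d ≤ (gr (d + 1)).comap f) {κ : {i : ℕ // 2 * i ≤ p} → Type*}
    (b : ∀ i : {i : ℕ // 2 * i ≤ p}, Module.Basis (κ i) k (primitivePart gr f p i)) :
    IsDecompEnd gr f (fun α : Σ i, κ i => (α.1 : ℕ)) (fun α => p - 2 * α.1 + 1)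
      (fun α => (b α.1 α.2 : V)) := by
  have hmem (i : {i : ℕ // 2 * i ≤ p}) (j : κ i) : (b i j : V) ∈ gr i :=
    (Submodule.mem_inf.mp (b i j).2).1
  have hzero (α : Σ i, κ i) : (f ^ (p - 2 * (α.1 : ℕ) + 1)) (b α.1 α.2 : V) = 0 :=
    LinearMap.mem_ker.mp (Submodule.mem_inf.mp (b α.1 α.2).2).2
  have htop := h.linearIndependent_pow_apply hgr.submodule_iSupIndep hdeg hmem fun i =>
    (b i).linearIndependent.map' (primitivePart gr f p i).subtype (Submodule.ker_subtype _)
  have hindep := linearIndependent_pow_apply_of_top (f := f)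
    (dv := fun α : Σ i, κ i => p - 2 * (α.1 : ℕ) + 1) (e := fun α => (b α.1 α.2 : V)) hzero
    (by simpa only [Nat.add_sub_cancel] using htop)
  refine ⟨fun _ => Nat.succ_pos _, fun α j _ => pow_mem_of_le_comap hdeg j (hmem α.1 α.2), hzero,
    hindep, ?_⟩
  have hstable := span_pow_apply_le_comap (f := f)
    (dv := fun α : Σ i, κ i => p - 2 * (α.1 : ℕ) + 1) (e := fun α => (b α.1 α.2 : V)) hzero
  rw [eq_top_iff, ← hgr.submodule_iSup_eq_top]
  refine iSup_le (h.grading_le_of_primitivePart_le hdeg hstable fun i hi => ?_)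
  rw [← (primitivePart gr f p i).map_subtype_top, ← (b ⟨i, hi⟩).span_eq, Submodule.map_span_le]
  rintro _ ⟨j, rfl⟩
  exact Submodule.subset_span ⟨⟨⟨⟨i, hi⟩, j⟩, ⟨0, Nat.succ_pos _⟩⟩, rfl⟩

theorem exists_isDecompEnd (h : HasLefschetzRange gr f p p) (hgr : DirectSum.IsInternal gr)
    (hdeg : ∀ d, gr d ≤ (gr (d + 1)).comap f) :
    ∃ (Λ : Type v) (iv dv : Λ → ℕ) (e : Λ → V), IsDecompEnd gr f iv dv e :=
  ⟨_, _, _, _, h.isDecompEnd_of_basis hgr hdeg fun _ => Module.Basis.ofVectorSpace k _⟩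

end HasLefschetzRange

/-! ### Polynomial actions and the tensor product theorem -/

section PolynomialAction

variable {k A T : Type*} [Field k] [CommRing A] [Algebra k A] [AddCommGroup T] [Module k T]
  [Module A T] [IsScalarTower k A T] {gr : ℕ → Submodule k T} {z : A}

theorem lsmul_pow_apply (a : ℕ) (x : T) : (Algebra.lsmul k k T z ^ a) x = z ^ a • x := by
  rw [← map_pow, Algebra.lsmul_coe]

theorem isSLEnd_lsmul_iff : IsSLEnd gr (Algebra.lsmul k k T z) ↔ IsSLAction gr z := by
  simp only [IsSLEnd, IsSLAction, lsmul_pow_apply]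

theorem isDecompEnd_lsmul_iff {Λ : Type*} {iv dv : Λ → ℕ} {e : Λ → T} :
    IsDecompEnd gr (Algebra.lsmul k k T z) iv dv e ↔ IsDecomp gr z iv dv e := by
  simp only [IsDecompEnd, IsDecomp, lsmul_pow_apply]

end PolynomialAction

theorem IsGrading.le_comap_lsmul {k M : Type*} [Field k] {n : ℕ} [AddCommGroup M] [Module k M]
    [Module (MvPolynomial (Fin n) k) M] [IsScalarTower k (MvPolynomial (Fin n) k) M]
    {gr : ℕ → Submodule k M} (hgr : IsGrading k n gr) {l : MvPolynomial (Fin n) k}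
    (hl : l ∈ homogeneousSubmodule (Fin n) k 1) (d : ℕ) :
    gr d ≤ (gr (d + 1)).comap (Algebra.lsmul k k M l) := fun x hx => by
  rw [add_comm]
  exact hgr.2 1 d l hl x hx

theorem tensorAct_add_tmul {k : Type*} [Field k] {n : ℕ} {M N : Type*} [AddCommGroup M]
    [Module k M] [Module (MvPolynomial (Fin n) k) M] [IsScalarTower k (MvPolynomial (Fin n) k) M]
    [AddCommGroup N] [Module k N] [Module (MvPolynomial (Fin n) k) N]
    [IsScalarTower k (MvPolynomial (Fin n) k) N] (l y : MvPolynomial (Fin n) k) :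
    tensorAct k M N (l ⊗ₜ 1 + 1 ⊗ₜ y) =
      tensorSum (Algebra.lsmul k k M l) (Algebra.lsmul k k N y) := by
  refine TensorProduct.ext' fun u v => ?_
  rw [map_add]
  simp only [tensorAct, AlgHom.comp_apply, Algebra.TensorProduct.map_tmul, map_one]
  rfl

theorem statement6_general {k M N : Type*} [Field k] [CharZero k] [AddCommGroup M] [Module k M]
    [AddCommGroup N] [Module k N] {grM : ℕ → Submodule k M} {grN : ℕ → Submodule k N}
    [∀ d, FiniteDimensional k (grM d)] (hgrM : DirectSum.IsInternal grM)
    (hgrN : DirectSum.IsInternal grN) {f : Module.End k M} {g : Module.End k N}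
    (hdeg : ∀ d, grM d ≤ (grM (d + 1)).comap f) (hf : IsSLEnd grM f) (hg : IsSLEnd grN g) {p : ℕ}
    (hsym : ∀ d ≤ p, Module.finrank k (grM d) = Module.finrank k (grM (p - d)))
    (hbot : ∀ d, p < d → grM d = ⊥) {ΛN : Type*} {ivN dvN : ΛN → ℕ} {eN : ΛN → N}
    (hdecN : IsDecompEnd grN g ivN dvN eN) (hacN : AlmostCentered ivN dvN) :
    IsSLEnd (tensorGr grM grN) (tensorSum f g) ∧
      ∀ {Λ : Type*} {iv dv : Λ → ℕ} {e : Λ → M ⊗[k] N},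
        IsDecompEnd (tensorGr grM grN) (tensorSum f g) iv dv e → AlmostCentered iv dv := by
  have hrangeM : HasLefschetzRange grM f p p := hf.hasLefschetzRange_of_symmetric hdeg hsym hbot
  obtain ⟨ΛM, ivM, dvM, eM, hdecM⟩ := hrangeM.exists_isDecompEnd hgrM hdeg
  obtain ⟨c, hcN⟩ := hdecN.exists_centersBetween hg hacN
  have hslM := hdecM.isSl2Graded hgrM (hdecM.centersBetween hrangeM)
  have hslN := hdecN.isSl2Graded hgrN hcN
  have hrange : HasLefschetzRange (tensorGr grM grN) (tensorSum f g) (p + c) (p + (c + 1)) :=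
    (hslM.tensor hslN).hasLefschetzRange
  exact ⟨hrange.isSLEnd le_rfl, fun hdec => (hdec.centersBetween hrange).almostCentered le_rfl⟩

/-- Let `l, y ∈ R_1` be strong Lefschetz elements for the finite length
graded `R`-modules `M` and `N` respectively.  If the Hilbert function of `M` is symmetric
and the decomposition of `N` as a graded `k[y]`-module is almost centered, then `M ⊗_k N`
has the strong Lefschetz property (witnessed by a linear form of `R ⊗_k R`) and every
decomposition of `M ⊗_k N` as a graded `k[l + y]`-module (`l + y = l ⊗ 1 + 1 ⊗ y`) is
almost centered. -/
theorem statement6 {k : Type} [Field k] [CharZero k] {n : ℕ} {M N : Type}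
    [AddCommGroup M] [Module k M] [Module (MvPolynomial (Fin n) k) M]
    [IsScalarTower k (MvPolynomial (Fin n) k) M]
    [Module.Finite (MvPolynomial (Fin n) k) M] [FiniteDimensional k M]
    [AddCommGroup N] [Module k N] [Module (MvPolynomial (Fin n) k) N]
    [IsScalarTower k (MvPolynomial (Fin n) k) N]
    [Module.Finite (MvPolynomial (Fin n) k) N] [FiniteDimensional k N]
    (grM : ℕ → Submodule k M) (hgrM : IsGrading k n grM)
    (grN : ℕ → Submodule k N) (hgrN : IsGrading k n grN)
    (l : MvPolynomial (Fin n) k) (hl : l ∈ homogeneousSubmodule (Fin n) k 1)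
    (hSLM : IsSLAction grM l)
    (y : MvPolynomial (Fin n) k) (hy : y ∈ homogeneousSubmodule (Fin n) k 1)
    (hSLN : IsSLAction grN y)
    (pM : ℕ) (hpM : IsSocleDegree grM pM)
    (hsym : ∀ d : ℕ, d ≤ pM →
      Module.finrank k (grM d) = Module.finrank k (grM (pM - d)))
    {ΛN : Type} [Fintype ΛN] (ivN dvN : ΛN → ℕ) (eN : ΛN → N)
    (hdecN : IsDecomp grN y ivN dvN eN) (hacN : AlmostCentered ivN dvN) :
    (∃ w : (MvPolynomial (Fin n) k) ⊗[k] (MvPolynomial (Fin n) k),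
      IsLinearForm2 w ∧ IsSLEnd (tensorGr grM grN) (tensorAct k M N w)) ∧
    (∀ (Λ' : Type) (_ : Fintype Λ') (iv' dv' : Λ' → ℕ) (e' : Λ' → M ⊗[k] N),
      IsDecompEnd (tensorGr grM grN)
        (tensorAct k M N (l ⊗ₜ[k] (1 : MvPolynomial (Fin n) k) +
          (1 : MvPolynomial (Fin n) k) ⊗ₜ[k] y)) iv' dv' e' →
        AlmostCentered iv' dv') := by
  have hsl := statement6_general hgrM.1 hgrN.1 (hgrM.le_comap_lsmul hl)
    (isSLEnd_lsmul_iff.mpr hSLM) (isSLEnd_lsmul_iff.mpr hSLN) hsym hpM.2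
    (isDecompEnd_lsmul_iff.mpr hdecN) hacN
  rw [← tensorAct_add_tmul] at hsl
  exact ⟨⟨_, ⟨l, y, hl, hy, rfl⟩, hsl.1⟩, fun _ _ _ _ _ => hsl.2⟩
end

section
/- Let k have characteristic zero, R = k[x_1,x_2], and M = R/(x_1^a, x_2^b) with a, b ≥ 1. Then l = x_1 + x_2 is a strong Lefschetz element for M, and as a graded S-module, S = k[l], M decomposes as M ≅ ⊕_{h=0}^{min(a,b)−1} S(−h)/(l^{a+b−1−2h}). -/
open MvPolynomial TensorProduct

/-- The grading on the quotient `k[x_1, …, x_n]/I` induced by the standard grading: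
the degree `e` piece is the image of the homogeneous polynomials of degree `e`. -/
noncomputable def quotGr {k : Type*} [Field k] {σ : Type*} (I : Ideal (MvPolynomial σ k))
    (e : ℕ) : Submodule k (MvPolynomial σ k ⧸ I) :=
  Submodule.map (Ideal.Quotient.mkₐ k I).toLinearMap (homogeneousSubmodule σ k e)

/-!
Multiplication by `l = ∑ i, x_i` and the second order operator `E = ∑ i, (a_i - 1) ∂_i - x_i ∂_i²`
generate an action of `𝔰𝔩₂` on the polynomial ring, and `E` preserves the ideal `(x_i ^ a_i)_i`.
If `E p = 0` with `p` homogeneous of degree `d`, then `E (l ^ (j + 1) p)` is `(j + 1) (n - j)` times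
`l ^ j p`, where `n = ∑ i, (a_i - 1) - 2 d`. In characteristic zero, a string modulo the ideal
can therefore only end at `l ^ n p`. For two variables there is such a form outside the ideal in
each degree `h < min a b`, and the tops of their strings lie in the distinct degrees
`a + b - 2 - h`. Hence the strings are independent, and they are a basis because their lengths
`a + b - 1 - 2 h` add up to `a b`. All strings are symmetric about the same degree, which is why
every power of `l` is injective or surjective in each degree.
-/

section Strings

variable {R A T Λ : Type*} [AddCommGroup T]

theorem linearIndependent_pow_smul_of_top [Ring R] [Module R T] [Monoid A]
    [DistribMulAction A T] [SMulCommClass A R T] {z : A} {dv : Λ → ℕ} {e : Λ → T}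
    (hzero : ∀ α, z ^ dv α • e α = 0)
    (htop : LinearIndependent R fun α => z ^ (dv α - 1) • e α) :
    LinearIndependent R fun q : Σ α, Fin (dv α) => z ^ (q.2 : ℕ) • e q.1 := by
  classical
  rw [linearIndependent_iff']
  intro s g hg
  by_contra! hne
  obtain ⟨q₁, hq₁, hgq₁⟩ := hne
  obtain ⟨q₀, hq₀, hmax⟩ := (s.filter (g · ≠ 0)).exists_max_image (fun q => dv q.1 - q.2)
    ⟨q₁, Finset.mem_filter.2 ⟨hq₁, hgq₁⟩⟩
  set m := dv q₀.1 - q₀.2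
  let t := s.filter fun q => dv q.1 - q.2 = m
  have hindep : LinearIndepOn R (fun q : Σ α, Fin (dv α) => z ^ (dv q.1 - 1) • e q.1) t := by
    refine htop.comp (fun q : (t : Set (Σ α, Fin (dv α))) => q.1.1) ?_
    rintro ⟨⟨α, i⟩, hi⟩ ⟨⟨β, j⟩, hj⟩ (rfl : α = β)
    have hi' := (Finset.mem_filter.1 hi).2
    have hj' := (Finset.mem_filter.1 hj).2
    simp only [Subtype.mk.injEq, Sigma.mk.injEq, heq_eq_eq, true_and, Fin.ext_iff]
    dsimp only at hi' hj'
    omega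
  -- Multiplying the relation by `z ^ (m - 1)` keeps only the terms farthest from their tops.
  have hsum : ∑ q ∈ t, g q • z ^ (dv q.1 - 1) • e q.1 = 0 := by
    rw [← smul_zero (z ^ (m - 1)), ← hg, Finset.smul_sum, Finset.sum_filter]
    refine Finset.sum_congr rfl fun q hq => ?_
    rw [smul_comm (z ^ (m - 1)) (g q), ← mul_smul (z ^ (m - 1)), ← pow_add]
    split_ifs with h
    · rw [show m - 1 + q.2 = dv q.1 - 1 by omega]
    · by_cases hgq : g q = 0
      · simp only [hgq, zero_smul]
      · have hlt := hmax q (Finset.mem_filter.2 ⟨hq, hgq⟩)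
        rw [show m - 1 + q.2 = m - 1 + q.2 - dv q.1 + dv q.1 by omega, pow_add, mul_smul, hzero,
          smul_zero, smul_zero]
  have hq₀t : q₀ ∈ t := Finset.mem_filter.2 ⟨(Finset.mem_filter.1 hq₀).1, rfl⟩
  exact (Finset.mem_filter.1 hq₀).2 (linearIndepOn_finset_iff.1 hindep g hsum q₀ hq₀t)

theorem le_span_image_of_iSupIndep {ι κ : Type*} [Ring R] [Module R T] {gr : κ → Submodule R T}
    (hgr : iSupIndep gr) {v : ι → T} {deg : ι → κ} (hv : ∀ i, v i ∈ gr (deg i))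
    (hspan : Submodule.span R (Set.range v) = ⊤) (n : κ) :
    gr n ≤ Submodule.span R (v '' {i | deg i = n}) := by
  set Y := Submodule.span R (v '' {i | deg i = n})
  set W := Submodule.span R (v '' {i | deg i = n}ᶜ)
  have hY : Y ≤ gr n := by
    rw [Submodule.span_le]
    rintro _ ⟨i, rfl, rfl⟩
    exact hv i
  have hW : W ≤ ⨆ j ≠ n, gr j := by
    rw [Submodule.span_le]
    rintro _ ⟨i, hi, rfl⟩
    exact Submodule.mem_iSup_of_mem _ (Submodule.mem_iSup_of_mem hi (hv i))
  have htop : Y ⊔ W = ⊤ := by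
    rw [← Submodule.span_union, ← Set.image_union, Set.union_compl_self, Set.image_univ, hspan]
  have hbot : W ⊓ gr n = ⊥ := ((hgr n).mono_right hW).symm.eq_bot
  calc gr n = (Y ⊔ W) ⊓ gr n := by rw [htop, top_inf_eq]
    _ = Y ⊔ W ⊓ gr n := (sup_inf_assoc_of_le W hY)
    _ ≤ Y := by rw [hbot, sup_bot_eq]

variable {k : Type*} [Field k] [CommRing A] [Module k T] [Module A T] [SMulCommClass A k T]
  {gr : ℕ → Submodule k T} {z : A} {iv dv : Λ → ℕ} {e : Λ → T}

theorem isDecomp_of_top_ne_zero [Fintype Λ] [FiniteDimensional k T] (hgr : iSupIndep gr)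
    (hmem : ∀ α j, z ^ j • e α ∈ gr (iv α + j)) (hzero : ∀ α, z ^ dv α • e α = 0)
    (htop : ∀ α, z ^ (dv α - 1) • e α ≠ 0)
    (hinj : Function.Injective fun α => iv α + (dv α - 1))
    (hcard : ∑ α, dv α = Module.finrank k T) : IsDecomp gr z iv dv e := by
  have hli := linearIndependent_pow_smul_of_top (R := k) hzero
    ((hgr.comp hinj).linearIndependent _ (fun α => hmem α _) htop)
  refine ⟨fun α => ?_, fun α j _ => hmem α j, hzero, hli,
    hli.span_eq_top_of_card_eq_finrank' (by simpa using hcard)⟩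
  by_contra! hα
  have hα : dv α = 0 := by omega
  exact htop α (by simpa [hα] using hzero α)

theorem IsDecomp.isSLAction_of_centered (h : IsDecomp gr z iv dv e) (hgr : iSupIndep gr) {N : ℕ}
    (hN : ∀ α, 2 * iv α + dv α = N) : IsSLAction gr z := by
  obtain ⟨-, hmem, -, hli, hspan⟩ := h
  have hle := le_span_image_of_iSupIndep hgr (deg := fun q : Σ α, Fin (dv α) => iv q.1 + q.2)
    (fun q => hmem q.1 q.2 q.2.2) hspan
  intro c d
  let f : T →ₗ[k] T := DistribSMul.toLinearMap k T (z ^ c)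
  rcases lt_or_ge (2 * d + c) N with hlow | hhigh
  · left
    have hshift : ∀ q : {q : Σ α, Fin (dv α) // iv q.1 + q.2 = d}, c + q.1.2 < dv q.1.1 := by
      rintro ⟨⟨α, j⟩, hq⟩
      have := hN α
      dsimp only at hq ⊢
      omega
    have hdisj : Disjoint (gr d) (LinearMap.ker f) := by
      refine Disjoint.mono_left (hle d) ?_
      rw [Set.image_eq_range]
      refine Submodule.range_ker_disjoint ?_
      have hinj : Function.Injective fun q : {q : Σ α, Fin (dv α) // iv q.1 + q.2 = d} =>
          (⟨q.1.1, ⟨c + q.1.2, hshift q⟩⟩ : Σ α, Fin (dv α)) := by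
        rintro ⟨⟨α, i⟩, hi⟩ ⟨⟨β, j⟩, hj⟩ hij
        obtain rfl : α = β := congrArg Sigma.fst hij
        simpa [Fin.ext_iff] using hij
      have hshifted := hli.comp _ hinj
      simp only [Function.comp_def, pow_add, mul_smul] at hshifted
      exact hshifted
    exact fun x hx hfx => Submodule.disjoint_def.1 hdisj x hx hfx
  · right
    suffices gr (d + c) ≤ (gr d).map f from fun w hw => this hw
    refine (hle (d + c)).trans (Submodule.span_le.2 ?_)
    rintro _ ⟨⟨α, j⟩, hj, rfl⟩
    have := hN α
    have := j.2
    have hcj : c ≤ j ∧ iv α + (j - c) = d := by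
      simp only [Set.mem_ofPred_eq] at hj
      omega
    refine ⟨z ^ (j - c : ℕ) • e α, hcj.2 ▸ hmem α (j - c) (by omega), ?_⟩
    simp only [f, DistribSMul.toLinearMap_apply, ← mul_smul, ← pow_add, Nat.add_sub_cancel' hcj.1]

end Strings

section QuotGr

variable {σ k : Type*} [Field k] {I : Ideal (MvPolynomial σ k)}

attribute [local instance] MvPolynomial.gradedAlgebra in
theorem iSupIndep_quotGr (hI : I.IsHomogeneous (homogeneousSubmodule σ k)) :
    iSupIndep (quotGr I) := by
  intro n
  rw [Submodule.disjoint_def]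
  rintro _ ⟨p, hp, rfl⟩ hpq
  simp only [quotGr, ← Submodule.map_iSup] at hpq
  obtain ⟨q, hq, hqp⟩ := hpq
  have hq0 : homogeneousComponent n q = 0 := by
    have hle : ⨆ j ≠ n, homogeneousSubmodule σ k j ≤ LinearMap.ker (homogeneousComponent n) :=
      iSup₂_le fun j hj r hr => by
        rw [LinearMap.mem_ker, homogeneousComponent_of_mem hr, if_neg hj.symm]
    exact hle hq
  have hsub : p - q ∈ I := Ideal.Quotient.eq.1 hqp.symm
  have hpI := homogeneousComponent_mem_of_mem hI hsub n
  rw [map_sub, hq0, sub_zero, homogeneousComponent_eq_self hp] at hpI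
  exact Ideal.Quotient.eq_zero_iff_mem.2 hpI

theorem smul_mem_quotGr {p : MvPolynomial σ k} {x : MvPolynomial σ k ⧸ I} {m n : ℕ}
    (hp : p.IsHomogeneous m) (hx : x ∈ quotGr I n) : p • x ∈ quotGr I (n + m) := by
  obtain ⟨q, hq, rfl⟩ := hx
  exact ⟨p * q, add_comm m n ▸ hp.mul hq, rfl⟩

end QuotGr

section MonomialCompleteIntersection

variable {σ R : Type*} [CommRing R]

/-- The ideal `(x_i ^ a_i)_i` of a monomial complete intersection. -/
noncomputable def variablePowerIdeal (R : Type*) [CommRing R] (a : σ → ℕ) :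
    Ideal (MvPolynomial σ R) :=
  Ideal.span (Set.range fun i => X i ^ a i)

theorem variablePowerIdeal_fin_two (a b : ℕ) :
    variablePowerIdeal R ![a, b] = Ideal.span {X 0 ^ a, X 1 ^ b} := by
  rw [variablePowerIdeal]
  congr 1
  ext p
  simp [eq_comm]

theorem mem_variablePowerIdeal_iff {a : σ → ℕ} {p : MvPolynomial σ R} :
    p ∈ variablePowerIdeal R a ↔ ∀ m : σ →₀ ℕ, (∀ i, m i < a i) → coeff m p = 0 := by
  have hrange : (Set.range fun i => (X i ^ a i : MvPolynomial σ R)) =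
      (fun m => monomial m 1) '' Set.range fun i => Finsupp.single i (a i) := by
    simp only [← Set.range_comp, Function.comp_def, X_pow_eq_monomial]
  rw [variablePowerIdeal, hrange, mem_ideal_span_monomial_image]
  refine forall_congr' fun m => ?_
  simp only [mem_support_iff, Set.exists_range_iff, Finsupp.single_le_iff]
  rw [← not_imp_not, not_not]
  simp only [not_exists, not_le]

attribute [local instance] MvPolynomial.gradedAlgebra in
theorem isHomogeneous_variablePowerIdeal (a : σ → ℕ) :
    (variablePowerIdeal R a).IsHomogeneous (homogeneousSubmodule σ R) := by
  refine Ideal.homogeneous_span _ _ ?_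
  rintro _ ⟨i, rfl⟩
  exact ⟨a i, isHomogeneous_X_pow i (a i)⟩

/-- Coordinates on the quotient by `variablePowerIdeal R a`: the monomials `x ^ m` with
`m i < a i` form a basis. -/
noncomputable def quotientVariablePowerIdealEquiv [Finite σ] (a : σ → ℕ) :
    (MvPolynomial σ R ⧸ variablePowerIdeal R a) ≃ₗ[R] ((∀ i, Fin (a i)) → R) :=
  let exponent (m : ∀ i, Fin (a i)) : σ →₀ ℕ := Finsupp.equivFunOnFinite.symm fun i => m i
  let φ : MvPolynomial σ R →ₗ[R] ((∀ i, Fin (a i)) → R) :=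
    LinearMap.pi fun m => lcoeff R (exponent m)
  have hker : (variablePowerIdeal R a).restrictScalars R = LinearMap.ker φ := by
    ext p
    rw [Submodule.restrictScalars_mem, mem_variablePowerIdeal_iff, LinearMap.mem_ker]
    refine ⟨fun h => funext fun m => h _ fun i => (m i).2, fun h m hm => ?_⟩
    have hexp : exponent (fun i => ⟨m i, hm i⟩) = m := Finsupp.ext fun _ => rfl
    exact hexp ▸ congrFun h fun i => ⟨m i, hm i⟩
  have hsurj : Function.Surjective φ := by
    classical
    have := Fintype.ofFinite (∀ i, Fin (a i))
    intro g
    have hinj : Function.Injective exponent := fun m n h =>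
      funext fun i => Fin.ext (DFunLike.congr_fun h i)
    refine ⟨∑ m, monomial (exponent m) (g m), funext fun n => ?_⟩
    simp [φ, coeff_monomial, hinj.eq_iff]
  (Submodule.Quotient.restrictScalarsEquiv R _).symm ≪≫ₗ Submodule.quotEquivOfEq _ _ hker ≪≫ₗ
    φ.quotKerEquivOfSurjective hsurj

instance finite_quotient_variablePowerIdeal [Finite σ] (a : σ → ℕ) :
    Module.Finite R (MvPolynomial σ R ⧸ variablePowerIdeal R a) :=
  .equiv (quotientVariablePowerIdealEquiv a).symm

theorem finrank_quotient_variablePowerIdeal [Nontrivial R] [Fintype σ] (a : σ → ℕ) :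
    Module.finrank R (MvPolynomial σ R ⧸ variablePowerIdeal R a) = ∏ i, a i := by
  classical
  simp [(quotientVariablePowerIdealEquiv (R := R) a).finrank_eq]

theorem sum_X_mem_radical_variablePowerIdeal [Fintype σ] {a : σ → ℕ} :
    ∑ i, X i ∈ (variablePowerIdeal R a).radical :=
  sum_mem fun i _ => ⟨a i, Ideal.subset_span ⟨i, rfl⟩⟩

end MonomialCompleteIntersection

section Lowering

variable {σ R : Type*} [Fintype σ] [CommRing R] {a : σ → ℕ} {p : MvPolynomial σ R} {d : ℕ}

/-- The operator `∑ i, (a_i - 1) ∂_i - x_i ∂_i²`, which lowers degrees by one. Together with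
multiplication by `∑ i, x_i` it generates an action of `𝔰𝔩₂` in which the form `1` has weight
`-∑ i, (a_i - 1)`. On powers of one variable it sends `x ^ m` to `m (a - m) x ^ (m - 1)`, so it
preserves `(x ^ a)`. -/
noncomputable def lowering (R : Type*) [CommRing R] (a : σ → ℕ) :
    MvPolynomial σ R →ₗ[R] MvPolynomial σ R :=
  ∑ i, (((a i : R) - 1) • (pderiv i).toLinearMap -
    LinearMap.mulLeft R (X i) ∘ₗ (pderiv i).toLinearMap ∘ₗ (pderiv i).toLinearMap)

theorem lowering_apply (a : σ → ℕ) (p : MvPolynomial σ R) :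
    lowering R a p = ∑ i, (C ((a i : R) - 1) * pderiv i p - X i * pderiv i (pderiv i p)) := by
  simp [lowering, smul_eq_C_mul]

theorem coeff_lowering (a : σ → ℕ) (p : MvPolynomial σ R) (m : σ →₀ ℕ) :
    coeff m (lowering R a p) =
      ∑ i, (m i + 1 : R) * (a i - (m i + 1)) * coeff (m + Finsupp.single i 1) p := by
  classical
  rw [lowering_apply, coeff_sum]
  refine Finset.sum_congr rfl fun i _ => ?_
  have hX : coeff m (X i * pderiv i (pderiv i p)) = m i * coeff m (pderiv i p) := by
    rw [coeff_X_mul']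
    split_ifs with hi
    · have hmi : Finsupp.single i 1 ≤ m := by
        simpa [Nat.one_le_iff_ne_zero] using hi
      rw [coeff_pderiv, tsub_add_cancel_of_le hmi, Finsupp.tsub_apply, Finsupp.single_eq_same,
        mul_comm]
      have : 1 ≤ m i := by simpa using hmi
      push_cast [this]
      ring
    · simp [Finsupp.notMem_support_iff.1 hi]
  rw [coeff_sub, coeff_C_mul, hX, coeff_pderiv]
  ring

theorem lowering_mem_variablePowerIdeal (hp : p ∈ variablePowerIdeal R a) :
    lowering R a p ∈ variablePowerIdeal R a := by
  classical
  rw [mem_variablePowerIdeal_iff] at hp ⊢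
  intro m hm
  rw [coeff_lowering]
  refine Finset.sum_eq_zero fun i _ => ?_
  rcases (Nat.succ_le_of_lt (hm i)).eq_or_lt with hi | hi
  · simp [← hi]
  · rw [hp, mul_zero]
    intro j
    rcases eq_or_ne j i with rfl | hij
    · simpa using hi
    · simpa [hij] using hm j

theorem lowering_sum_X_mul (a : σ → ℕ) (hp : p.IsHomogeneous d) :
    lowering R a ((∑ i, X i) * p) =
      (∑ i, X i) * lowering R a p + C (∑ i, ((a i : R) - 1) - 2 * d) * p := by
  classical
  have hderiv (i : σ) (q : MvPolynomial σ R) :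
      pderiv i ((∑ j, X j) * q) = q + (∑ j, X j) * pderiv i q := by
    simp [pderiv_X, Pi.single_apply, add_comm]
  have heuler : ∑ i, X i * pderiv i p = C (d : R) * p := by
    rw [hp.sum_X_mul_pderiv, nsmul_eq_mul, map_natCast]
  have hweight : C (∑ i, ((a i : R) - 1) - 2 * d) * p =
      ∑ i, (C ((a i : R) - 1) * p - 2 * (X i * pderiv i p)) := by
    rw [Finset.sum_sub_distrib (fun i => C ((a i : R) - 1) * p), ← Finset.mul_sum, heuler,
      ← Finset.sum_mul, ← map_sum, map_sub, map_mul, map_ofNat]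
    ring
  rw [lowering_apply, lowering_apply, hweight, Finset.mul_sum, ← Finset.sum_add_distrib]
  refine Finset.sum_congr rfl fun i _ => ?_
  simp only [hderiv, map_add]
  ring

theorem isHomogeneous_sum_X : (∑ i, X i : MvPolynomial σ R).IsHomogeneous 1 :=
  .sum _ _ _ fun i _ => isHomogeneous_X R i

theorem lowering_pow_succ_mul (hp : p.IsHomogeneous d) (hlow : lowering R a p = 0) (j : ℕ) :
    lowering R a ((∑ i, X i) ^ (j + 1) * p) =
      C ((j + 1) * (∑ i, ((a i : R) - 1) - 2 * d - j)) * ((∑ i, X i) ^ j * p) := by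
  induction j with
  | zero => simp [lowering_sum_X_mul a hp, hlow]
  | succ j ih =>
    have hhom := (isHomogeneous_sum_X (σ := σ) (R := R)).pow (j + 1) |>.mul hp
    rw [pow_succ', mul_assoc, lowering_sum_X_mul a hhom, ih]
    push_cast
    simp only [map_mul, map_add, map_sub, map_natCast, map_one, map_sum, map_ofNat]
    ring

end Lowering

section PrimitiveVector

variable {σ k : Type*} [Fintype σ] [Field k] [CharZero k] {a : σ → ℕ} {p : MvPolynomial σ k}
  {d n j : ℕ}

theorem sum_X_pow_mul_mem_of_pow_succ_mul_mem (hp : p.IsHomogeneous d) (hlow : lowering k a p = 0)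
    (hn : ∑ i, ((a i : k) - 1) = 2 * d + n) (hj : j ≠ n)
    (hmem : (∑ i, X i) ^ (j + 1) * p ∈ variablePowerIdeal k a) :
    (∑ i, X i) ^ j * p ∈ variablePowerIdeal k a := by
  have hlowered := lowering_mem_variablePowerIdeal hmem
  rw [lowering_pow_succ_mul hp hlow, hn] at hlowered
  have hconst : ((j + 1) * (2 * d + n - 2 * d - j) : k) ≠ 0 := by
    rw [add_sub_cancel_left]
    exact mul_ne_zero j.cast_add_one_ne_zero (sub_ne_zero.2 (Nat.cast_injective.ne hj.symm))
  exact (Ideal.unit_mul_mem_iff_mem _ (hconst.isUnit.map C)).1 hlowered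

theorem mem_of_sum_X_pow_mul_mem (hp : p.IsHomogeneous d) (hlow : lowering k a p = 0)
    (hn : ∑ i, ((a i : k) - 1) = 2 * d + n) (hj : j ≤ n)
    (hmem : (∑ i, X i) ^ j * p ∈ variablePowerIdeal k a) : p ∈ variablePowerIdeal k a := by
  induction j with
  | zero => simpa using hmem
  | succ j ih =>
    exact ih (by omega) (sum_X_pow_mul_mem_of_pow_succ_mul_mem hp hlow hn (by omega) hmem)

theorem sum_X_pow_succ_mul_mem (hp : p.IsHomogeneous d) (hlow : lowering k a p = 0)
    (hn : ∑ i, ((a i : k) - 1) = 2 * d + n) :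
    (∑ i, X i) ^ (n + 1) * p ∈ variablePowerIdeal k a := by
  obtain ⟨N, hN⟩ := sum_X_mem_radical_variablePowerIdeal (R := k) (a := a)
  have hlarge : (∑ i, X i) ^ (n + 1 + N) * p ∈ variablePowerIdeal k a := by
    rw [pow_add, mul_right_comm]
    exact Ideal.mul_mem_left _ _ hN
  clear hN
  induction N with
  | zero => exact hlarge
  | succ N ih => exact ih (sum_X_pow_mul_mem_of_pow_succ_mul_mem hp hlow hn (by omega) hlarge)

end PrimitiveVector

section PrimitiveForm

open scoped Nat

variable {R : Type*} [CommRing R] {a b h : ℕ}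

/-- A form of degree `h` in two variables that is killed by `lowering R ![a, b]` when `h < a` and
`h < b`, so a lowest weight vector for the strings of `x_1 + x_2`. Vanishing of the coefficients of
its image is a two-term recursion, solved here with denominators cleared by the factorials. -/
noncomputable def primitiveForm (R : Type*) [CommRing R] (a b h : ℕ) : MvPolynomial (Fin 2) R :=
  ∑ q ∈ Finset.HasAntidiagonal.antidiagonal h,
    monomial (Finsupp.single 0 q.1 + Finsupp.single 1 q.2)
      ((-1) ^ q.1 * (h.choose q.1 * (a - 1 - q.1)! * (b - 1 - q.2)!))

theorem coeff_primitiveForm (m : Fin 2 →₀ ℕ) :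
    coeff m (primitiveForm R a b h) = if m 0 + m 1 = h then
      (-1) ^ m 0 * (h.choose (m 0) * (a - 1 - m 0)! * (b - 1 - m 1)! : R) else 0 := by
  classical
  have hexp (q : ℕ × ℕ) :
      Finsupp.single 0 q.1 + Finsupp.single 1 q.2 = m ↔ q = (m 0, m 1) := by
    simp [Finsupp.ext_iff, Fin.forall_fin_two, Prod.ext_iff]
  simp only [primitiveForm, coeff_sum, coeff_monomial, hexp, Finset.sum_ite_eq',
    Finset.HasAntidiagonal.mem_antidiagonal]

theorem isHomogeneous_primitiveForm : (primitiveForm R a b h).IsHomogeneous h := by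
  refine .sum _ _ _ fun q hq => isHomogeneous_monomial _ ?_
  rw [map_add, Finsupp.degree_single, Finsupp.degree_single,
    Finset.HasAntidiagonal.mem_antidiagonal.1 hq]

theorem lowering_primitiveForm (ha : h < a) (hb : h < b) :
    lowering R ![a, b] (primitiveForm R a b h) = 0 := by
  ext m
  simp only [coeff_lowering, Fin.sum_univ_two, coeff_primitiveForm, Finsupp.add_apply,
    Finsupp.single_eq_same, Finsupp.single_eq_of_ne, Matrix.cons_val_zero, Matrix.cons_val_one,
    ne_eq, one_ne_zero, zero_ne_one, not_false_eq_true, add_zero, mul_ite, mul_zero, coeff_zero]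
  generalize m 0 = i
  generalize m 1 = j
  rw [add_right_comm i 1 j, ← add_assoc i j 1]
  split_ifs with hij
  · obtain ⟨a, rfl⟩ : ∃ a', a = a' + i + 2 := ⟨a - i - 2, by omega⟩
    obtain ⟨b, rfl⟩ : ∃ b', b = b' + j + 2 := ⟨b - j - 2, by omega⟩
    have hchoose : h.choose (i + 1) * (i + 1) = h.choose i * (j + 1) := by
      rw [Nat.choose_succ_right_eq, show h - i = j + 1 by omega]
    have hcast : (h.choose (i + 1) * (i + 1) : R) = h.choose i * (j + 1) := by
      simpa using congrArg (Nat.cast (R := R)) hchoose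
    rw [show a + i + 2 - 1 - (i + 1) = a by omega, show a + i + 2 - 1 - i = a + 1 by omega,
      show b + j + 2 - 1 - (j + 1) = b by omega, show b + j + 2 - 1 - j = b + 1 by omega,
      Nat.factorial_succ, Nat.factorial_succ]
    push_cast
    linear_combination (-1) ^ (i + 1) * ((a + 1) * a ! * ((b + 1) * b !)) * hcast
  · exact add_zero 0

theorem primitiveForm_notMem [CharZero R] (ha : h < a) (hb : h < b) :
    primitiveForm R a b h ∉ variablePowerIdeal R ![a, b] := by
  rw [mem_variablePowerIdeal_iff]
  intro hzero
  have hbound : ∀ i, Finsupp.single 1 h i < ![a, b] i := by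
    simpa [Fin.forall_fin_two, hb] using Nat.zero_lt_of_lt ha
  have hcoeff : ((a - 1)! * (b - 1 - h)! : R) = 0 := by
    simpa [coeff_primitiveForm] using hzero _ hbound
  exact mul_ne_zero (Nat.factorial_ne_zero _) (Nat.factorial_ne_zero _) (by exact_mod_cast hcoeff)

end PrimitiveForm

theorem sum_range_min_add_sub (a b : ℕ) :
    ∑ h ∈ Finset.range (min a b), (a + b - 1 - 2 * h) = a * b := by
  induction a generalizing b with
  | zero => simp
  | succ a ih =>
    cases b with
    | zero => simp
    | succ b =>
      have hshift (h : ℕ) : a + 1 + (b + 1) - 1 - 2 * (h + 1) = a + b - 1 - 2 * h := by omega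
      rw [Nat.succ_min_succ, Finset.sum_range_succ']
      simp only [hshift, ih]
      rw [mul_zero, tsub_zero]
      lia

theorem isDecomp_quotGr_variablePowerIdeal_fin_two {k : Type*} [Field k] [CharZero k] (a b : ℕ) :
    IsDecomp (quotGr (variablePowerIdeal k ![a, b])) (X 0 + X 1 : MvPolynomial (Fin 2) k)
      (fun h : Fin (min a b) => (h : ℕ)) (fun h => a + b - 1 - 2 * (h : ℕ))
      fun h => Ideal.Quotient.mk _ (primitiveForm k a b h) := by
  have hl : (X 0 + X 1 : MvPolynomial (Fin 2) k) = ∑ i, X i := (Fin.sum_univ_two _).symm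
  have hlt (h : Fin (min a b)) : (h : ℕ) < a ∧ (h : ℕ) < b := lt_min_iff.1 h.2
  have hlow (h : Fin (min a b)) := lowering_primitiveForm (R := k) (hlt h).1 (hlt h).2
  have hweight (h : Fin (min a b)) : ∑ i, ((![a, b] i : k) - 1) =
      2 * (h : ℕ) + (a + b - 1 - 2 * (h : ℕ) - 1 : ℕ) := by
    have := hlt h
    obtain ⟨n, hn⟩ : ∃ n, a + b = 2 * h + n + 2 := ⟨a + b - 2 * h - 2, by omega⟩
    have hcast : (a + b : k) = 2 * (h : ℕ) + n + 2 := by exact_mod_cast hn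
    rw [Fin.sum_univ_two, show a + b - 1 - 2 * (h : ℕ) - 1 = n by omega]
    simp only [Matrix.cons_val_zero, Matrix.cons_val_one]
    linear_combination hcast
  rw [hl]
  refine isDecomp_of_top_ne_zero (iSupIndep_quotGr (isHomogeneous_variablePowerIdeal _)) ?_ ?_ ?_
    ?_ ?_
  · intro h j
    have := smul_mem_quotGr (I := variablePowerIdeal k ![a, b])
      ((isHomogeneous_sum_X (σ := Fin 2) (R := k)).pow j)
      ⟨_, isHomogeneous_primitiveForm (a := a) (b := b) (h := h), rfl⟩
    rwa [one_mul] at this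
  · intro h
    refine Ideal.Quotient.eq_zero_iff_mem.2 ?_
    have hmem := sum_X_pow_succ_mul_mem isHomogeneous_primitiveForm (hlow h) (hweight h)
    rwa [Nat.sub_add_cancel (by have := hlt h; omega)] at hmem
  · intro h hzero
    exact primitiveForm_notMem (hlt h).1 (hlt h).2 <|
      mem_of_sum_X_pow_mul_mem isHomogeneous_primitiveForm (hlow h) (hweight h) le_rfl
        (Ideal.Quotient.eq_zero_iff_mem.1 hzero)
  · intro h h' heq
    have := hlt h
    have := hlt h'
    dsimp only at heq
    omega
  · rw [Fin.sum_univ_eq_sum_range (fun h => a + b - 1 - 2 * h), sum_range_min_add_sub,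
      finrank_quotient_variablePowerIdeal, Fin.prod_univ_two]
    rfl

/-- Let `k` have characteristic zero, `R = k[x_1, x_2]`, and
`M = R/(x_1^a, x_2^b)` with `a, b ≥ 1`.  Then `l = x_1 + x_2` is a strong Lefschetz element
for `M`, and as a graded `S = k[l]`-module, `M` decomposes as
`M ≅ ⊕_{h=0}^{min(a,b)-1} S(-h)/(l^{a+b-1-2h})`. -/
theorem statement14 {k : Type} [Field k] [CharZero k] (a b : ℕ) (ha : 1 ≤ a) (hb : 1 ≤ b) :
    ((X 0 + X 1 : MvPolynomial (Fin 2) k) ∈ homogeneousSubmodule (Fin 2) k 1 ∧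
      IsSLAction
        (quotGr (Ideal.span {(X 0 : MvPolynomial (Fin 2) k) ^ a, (X 1 : MvPolynomial (Fin 2) k) ^ b}))
        (X 0 + X 1 : MvPolynomial (Fin 2) k)) ∧
    ∃ e : Fin (min a b) →
        (MvPolynomial (Fin 2) k ⧸
          Ideal.span {(X 0 : MvPolynomial (Fin 2) k) ^ a, (X 1 : MvPolynomial (Fin 2) k) ^ b}),
      IsDecomp
        (quotGr (Ideal.span {(X 0 : MvPolynomial (Fin 2) k) ^ a, (X 1 : MvPolynomial (Fin 2) k) ^ b}))
        (X 0 + X 1 : MvPolynomial (Fin 2) k)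
        (fun h : Fin (min a b) => (h : ℕ)) (fun h : Fin (min a b) => a + b - 1 - 2 * (h : ℕ)) e := by
  have hdecomp := isDecomp_quotGr_variablePowerIdeal_fin_two (k := k) a b
  have hindep := iSupIndep_quotGr (isHomogeneous_variablePowerIdeal (R := k) ![a, b])
  rw [variablePowerIdeal_fin_two] at hdecomp hindep
  have hcentered (h : Fin (min a b)) : 2 * (h : ℕ) + (a + b - 1 - 2 * (h : ℕ)) = a + b - 1 := by
    omega
  exact ⟨⟨(isHomogeneous_X k 0).add (isHomogeneous_X k 1),
    hdecomp.isSLAction_of_centered hindep hcentered⟩, _, hdecomp⟩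
end

section
/- Let k be a field of characteristic p > 0 and let A = k[x,y]/(x^p, y^p). Then A does not have the strong Lefschetz property: for every linear form l of A, the map l^p : A_0 → A_p is neither injective nor surjective. -/
open MvPolynomial TensorProduct

/-!
In characteristic `p` the `q`-th power map, `q = p ^ e`, is additive, so it sends every polynomial
without constant term into the ideal `(x_i ^ q)`; hence `l ^ q = 0` in `k[x_i]/(x_i ^ q)` for every
linear form `l`. The degree `q` piece of this quotient is nonzero because it contains
`x_i ^ (q - 1) * x_j` with `i ≠ j`, and the degree `0` piece is nonzero because it contains `1`,
so the zero map between the two is neither injective nor surjective.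
-/

theorem pow_expChar_pow_mem_span_image {R : Type*} [CommSemiring R] (p e : ℕ) [ExpChar R p]
    {s : Set R} {f : R} (hf : f ∈ Ideal.span s) :
    f ^ p ^ e ∈ Ideal.span ((· ^ p ^ e) '' s) := by
  have hmap := Ideal.mem_map_of_mem (iterateFrobenius R p e) hf
  rwa [Ideal.map_span] at hmap

section IdealOfVarPows

variable {σ R : Type*} [CommSemiring R]

/-- The ideal `(x_i ^ n : i ∈ σ)` of the polynomial ring `R[x_i : i ∈ σ]`, generated by the `n`-th
powers of all variables. For `σ = Fin 2` and `n = p` it is the ideal `(x ^ p, y ^ p)`. -/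
noncomputable def idealOfVarPows (σ R : Type*) [CommSemiring R] (n : ℕ) :
    Ideal (MvPolynomial σ R) :=
  Ideal.span (Set.range fun i => X i ^ n)

theorem idealOfVarPows_fin_two (n : ℕ) :
    idealOfVarPows (Fin 2) R n = Ideal.span {X 0 ^ n, X 1 ^ n} := by
  rw [idealOfVarPows, ← Set.image_univ, ← Finset.coe_univ, Finset.univ_fin2, Finset.coe_pair,
    Set.image_pair]

theorem monomial_one_mem_idealOfVarPows_iff [Nontrivial R] {n : ℕ} {s : σ →₀ ℕ} :
    monomial s (1 : R) ∈ idealOfVarPows σ R n ↔ ∃ i, n ≤ s i := by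
  have hgen : (Set.range fun i : σ => (X i : MvPolynomial σ R) ^ n) =
      (fun t => monomial t (1 : R)) '' Set.range fun i => Finsupp.single i n := by
    simp only [X_pow_eq_monomial, ← Set.range_comp, Function.comp_def]
  classical
  rw [idealOfVarPows, hgen, mem_ideal_span_monomial_image]
  simp [support_monomial]

theorem mem_idealOfVars_pow_of_isHomogeneous {f : MvPolynomial σ R} {d : ℕ}
    (hf : f.IsHomogeneous d) : f ∈ idealOfVars σ R ^ d := by
  rw [mem_pow_idealOfVars_iff']
  exact fun s hs => hf.coeff_eq_zero hs.ne

theorem pow_expChar_pow_mem_idealOfVarPows (p e : ℕ) [ExpChar R p] {f : MvPolynomial σ R}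
    (hf : f ∈ idealOfVars σ R) : f ^ p ^ e ∈ idealOfVarPows σ R (p ^ e) := by
  rw [idealOfVarPows, Set.range_comp' (· ^ p ^ e) X]
  exact pow_expChar_pow_mem_span_image p e hf

end IdealOfVarPows

section QuotGr

variable {k σ : Type*} [Field k]

theorem quotGr_ne_bot {I : Ideal (MvPolynomial σ k)} {f : MvPolynomial σ k} {d : ℕ}
    (hf : f.IsHomogeneous d) (hfI : f ∉ I) : quotGr I d ≠ ⊥ :=
  (Submodule.ne_bot_iff _).2
    ⟨Ideal.Quotient.mk I f, ⟨f, hf, rfl⟩, fun h => hfI (Ideal.Quotient.eq_zero_iff_mem.1 h)⟩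

theorem quotGr_idealOfVarPows_ne_bot {n d : ℕ} {s : σ →₀ ℕ} (hs : ∀ i, s i < n)
    (hd : s.degree = d) : quotGr (idealOfVarPows σ k n) d ≠ ⊥ :=
  quotGr_ne_bot (isHomogeneous_monomial 1 hd) (f := monomial s 1) <| by
    simpa [monomial_one_mem_idealOfVarPows_iff] using hs

theorem quotGr_idealOfVarPows_self_ne_bot [Nontrivial σ] {n : ℕ} (hn : 1 < n) :
    quotGr (idealOfVarPows σ k n) n ≠ ⊥ := by
  classical
  obtain ⟨i, j, hij⟩ := exists_pair_ne σ
  let s : σ →₀ ℕ := Finsupp.single i (n - 1) + Finsupp.single j 1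
  have hs : ∀ m, s m < n := by
    intro m
    simp only [s, Finsupp.add_apply, Finsupp.single_apply]
    grind
  have hdeg : s.degree = n := by
    simp only [s, map_add, Finsupp.degree_single, Nat.sub_add_cancel hn.le]
  exact quotGr_idealOfVarPows_ne_bot hs hdeg

theorem pow_expChar_pow_eq_zero_of_mem_quotGr (p e : ℕ) [ExpChar k p] {d : ℕ} (hd : d ≠ 0)
    {l : MvPolynomial σ k ⧸ idealOfVarPows σ k (p ^ e)}
    (hl : l ∈ quotGr (idealOfVarPows σ k (p ^ e)) d) : l ^ p ^ e = 0 := by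
  obtain ⟨f, hf, rfl⟩ := hl
  have hf_vars : f ∈ idealOfVars σ k :=
    Ideal.pow_le_self hd (mem_idealOfVars_pow_of_isHomogeneous hf)
  exact Ideal.Quotient.eq_zero_iff_mem.2 (pow_expChar_pow_mem_idealOfVarPows p e hf_vars)

end QuotGr

theorem statement17_general {k σ : Type*} [Field k] [Nontrivial σ] (p e : ℕ) [ExpChar k p]
    (hq : 1 < p ^ e) :
    (∀ l ∈ quotGr (idealOfVarPows σ k (p ^ e)) 1,
      (¬ ∀ x ∈ quotGr (idealOfVarPows σ k (p ^ e)) 0, l ^ p ^ e * x = 0 → x = 0) ∧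
      (¬ ∀ z ∈ quotGr (idealOfVarPows σ k (p ^ e)) (p ^ e),
        ∃ x ∈ quotGr (idealOfVarPows σ k (p ^ e)) 0, l ^ p ^ e * x = z)) ∧
    ¬ ∃ l ∈ quotGr (idealOfVarPows σ k (p ^ e)) 1,
      IsSLAction (quotGr (idealOfVarPows σ k (p ^ e))) l := by
  have hzero_ne_bot : quotGr (idealOfVarPows σ k (p ^ e)) 0 ≠ ⊥ :=
    quotGr_idealOfVarPows_ne_bot (fun _ => zero_lt_one.trans hq) (map_zero Finsupp.degree)
  obtain ⟨x, hx, hx0⟩ := Submodule.exists_mem_ne_zero_of_ne_bot hzero_ne_bot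
  obtain ⟨w, hw, hw0⟩ :=
    Submodule.exists_mem_ne_zero_of_ne_bot (quotGr_idealOfVarPows_self_ne_bot (σ := σ) (k := k) hq)
  refine (and_iff_left_of_imp ?_).2 fun l hl => ?_
  · rintro hnot ⟨l, hl, hSL⟩
    obtain hinj | hsurj := hSL (p ^ e) 0
    · exact (hnot l hl).1 hinj
    · rw [zero_add] at hsurj
      exact (hnot l hl).2 hsurj
  · rw [pow_expChar_pow_eq_zero_of_mem_quotGr p e one_ne_zero hl]
    refine ⟨fun hinj => hx0 (hinj x hx (zero_mul x)), fun hsurj => ?_⟩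
    obtain ⟨y, -, hy⟩ := hsurj w hw
    exact hw0 (by rw [← hy, zero_mul])

set_option synthInstance.maxHeartbeats 1000000 in
/-- Let `k` be a field of characteristic `p > 0` and let
`A = k[x, y]/(x^p, y^p)`.  Then for every linear form `l` of `A`, the multiplication map
`l^p : A_0 → A_p` is neither injective nor surjective; in particular `A` does not have the
strong Lefschetz property. -/
theorem statement17 {k : Type} [Field k] (p : ℕ) (hp : p ≠ 0) [CharP k p] :
    (∀ l ∈ quotGr (Ideal.span {(X 0 : MvPolynomial (Fin 2) k) ^ p,
        (X 1 : MvPolynomial (Fin 2) k) ^ p}) 1,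
      (¬ ∀ x ∈ quotGr (Ideal.span {(X 0 : MvPolynomial (Fin 2) k) ^ p,
          (X 1 : MvPolynomial (Fin 2) k) ^ p}) 0, l ^ p * x = 0 → x = 0) ∧
      (¬ ∀ z ∈ quotGr (Ideal.span {(X 0 : MvPolynomial (Fin 2) k) ^ p,
          (X 1 : MvPolynomial (Fin 2) k) ^ p}) p,
        ∃ x ∈ quotGr (Ideal.span {(X 0 : MvPolynomial (Fin 2) k) ^ p,
          (X 1 : MvPolynomial (Fin 2) k) ^ p}) 0, l ^ p * x = z)) ∧
    ¬ ∃ l ∈ quotGr (Ideal.span {(X 0 : MvPolynomial (Fin 2) k) ^ p,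
        (X 1 : MvPolynomial (Fin 2) k) ^ p}) 1,
      IsSLAction (quotGr (Ideal.span {(X 0 : MvPolynomial (Fin 2) k) ^ p,
        (X 1 : MvPolynomial (Fin 2) k) ^ p})) l := by
  have : Fact p.Prime := ⟨CharP.char_prime_of_ne_zero k hp⟩
  have h := statement17_general (k := k) (σ := Fin 2) p 1 (by simpa using Nat.Prime.one_lt Fact.out)
  rwa [pow_one, idealOfVarPows_fin_two] at h
end
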